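/- Two-time marginal convergence in the diffusive regime for the Type-II ERW: if 0 < p < min(p_c^m, p_c^{m'}) and 0 < s ≤ t, then the ℝ^d × ℝ^d-valued random vector ((S_{⌊2ns⌋} − ns(ū + w̄))/√n, (S_{⌊2nt⌋} − nt(ū + w̄))/√n) converges in distribution, as n → ∞, to a centered Gaussian vector (W_s, W_t) on ℝ^{2d} whose covariance blocks are 𝔼[W_s W_s^⊤] = C_a s Σ(U) + C_{a'} s Σ(W), 𝔼[W_s W_t^⊤] = C_a s (t/s)^a Σ(U) + C_{a'} s (t/s)^{a'} Σ(W), and 𝔼[W_t W_t^⊤] = C_a t Σ(U) + C_{a'} t Σ(W). -/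

import Mathlib

/-!
The walk at time `M` is the sum of `⌈M / 2⌉` vectors `u_ξ` and `⌊M / 2⌋` vectors `w_η`, and the
two index sequences are independent. It is therefore enough to find, for one reinforced index
sequence `ξ` and zero-sum functions `f₁`, `f₂` of the index, the limiting joint characteristic
function of `n^{-1/2} (A_{N₁}(f₁) + A_{N₂}(f₂))`, where `A_k(h) = h(ξ_1) + ⋯ + h(ξ_k)` (`stepSum`)
and `N₁ ∼ n s`, `N₂ ∼ n t` (`tendsto_chain`).

For a zero-sum `h`, the conditional mean of `h(ξ_{k+1})` given the first `k` steps is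
`(a / k) A_k(h)`. A second order expansion of the conditional characteristic function yields, for
every bounded function `Φ` of the first `k` steps,
`𝔼[Φ exp(i A_{k+1}(h))] ≈ 𝔼[Φ exp(i A_k((1 + a / k) h))] · exp(-Var(h) / 2)`
(`norm_integral_step_le`), where `Var` is taken under the uniform law. The error is controlled by
the third power of `max |h|` and by the mean distance of the conditional law of the next step from
the uniform law, times `max |h|²`. That distance tends to `0` because `𝔼[A_k(h)²] = O(k)` when
`a < 1 / 2` (`tendsto_meanDev`).

Iterating down from time `N` to time `k₀` (`norm_integral_iterate_le`) multiplies `h` by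
`growth a N / growth a k₀`, where `growth a n = ∏_{k < n} (1 + a / k) ∼ n ^ a / Γ(a + 1)`, and
accumulates the variance `∑_k (growth a N / growth a (k + 1))²`. Summed over `k < N`, this variance
is asymptotic to `N / (1 - 2 a)` (`tendsto_accVar_div`), and for `h` of order `1 / √n` the errors
add up to `o(1)` (`tendsto_sum_stepErr`). Going from the second time down to the first and then
from the first down to time `1` gives the Gaussian characteristic function with the factor
`(t / s) ^ a` in the mixed term. The initial index drops out since `n ^ a / √n → 0`.

Independence multiplies the characteristic functions of the two chains, and Lévy's continuity
theorem turns their convergence into convergence in distribution (`exists_gaussian_limit`).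
-/

open MeasureTheory ProbabilityTheory Filter Finset Topology Matrix

noncomputable section

/-- The σ-algebra generated by the steps `ξ 1, …, ξ n` of the walk. -/
def stepFiltration {Ω : Type*} [MeasurableSpace Ω] {m : ℕ} (ξ : ℕ → Ω → Fin m) (n : ℕ) :
    MeasurableSpace Ω :=
  ⨆ k ∈ Finset.Icc 1 n, MeasurableSpace.comap (ξ k) ⊤

/-- A Type-II elephant random walk with memory parameter `p`: two independent
reinforced sequences of step indices, `ξ` (values in `Fin m`, first step `i0`) and
`η` (values in `Fin m'`, first step `j0`). -/
structure IsTypeIIERW {Ω : Type*} [MeasurableSpace Ω] (μ : Measure Ω)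
    (m m' : ℕ) (p : ℝ) (i0 : Fin m) (j0 : Fin m')
    (ξ : ℕ → Ω → Fin m) (η : ℕ → Ω → Fin m') : Prop where
  measurable_fst : ∀ n, Measurable (ξ n)
  measurable_snd : ∀ n, Measurable (η n)
  first_fst : ∀ᵐ ω ∂μ, ξ 1 ω = i0
  first_snd : ∀ᵐ ω ∂μ, η 1 ω = j0
  cond_fst : ∀ n : ℕ, 1 ≤ n → ∀ j : Fin m,
    (μ[(fun ω => if ξ (n + 1) ω = j then (1 : ℝ) else 0) | stepFiltration ξ n]) =ᵐ[μ]
      (fun ω => (1 / (n : ℝ)) * ∑ k ∈ Finset.Icc 1 n,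
        (p * (if ξ k ω = j then (1 : ℝ) else 0)
          + ((1 - p) / ((m : ℝ) - 1)) * (if ξ k ω = j then (0 : ℝ) else 1)))
  cond_snd : ∀ n : ℕ, 1 ≤ n → ∀ j : Fin m',
    (μ[(fun ω => if η (n + 1) ω = j then (1 : ℝ) else 0) | stepFiltration η n]) =ᵐ[μ]
      (fun ω => (1 / (n : ℝ)) * ∑ k ∈ Finset.Icc 1 n,
        (p * (if η k ω = j then (1 : ℝ) else 0)
          + ((1 - p) / ((m' : ℝ) - 1)) * (if η k ω = j then (0 : ℝ) else 1)))
  indep : IndepFun (fun ω => fun k => ξ k ω) (fun ω => fun k => η k ω) μ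

/-! ### A single reinforced sequence -/

section Chain

set_option linter.unusedSectionVars false

variable {Ω : Type*} [mΩ : MeasurableSpace Ω] {μ : Measure Ω} {m : ℕ} {p : ℝ}
  {ξ : ℕ → Ω → Fin m}

/-- Conditional probability that step `k + 1` has index `j`, given the first `k` steps. -/
def stepProb (p : ℝ) (ξ : ℕ → Ω → Fin m) (k : ℕ) (j : Fin m) (ω : Ω) : ℝ :=
  (1 / (k : ℝ)) * ∑ i ∈ Finset.Icc 1 k,
    (p * (if ξ i ω = j then (1 : ℝ) else 0)
      + ((1 - p) / ((m : ℝ) - 1)) * (if ξ i ω = j then (0 : ℝ) else 1))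

/-- The sum `h (ξ 1) + ⋯ + h (ξ k)` of a function of the step indices. -/
def stepSum (ξ : ℕ → Ω → Fin m) (h : Fin m → ℝ) (k : ℕ) (ω : Ω) : ℝ :=
  ∑ i ∈ Finset.Icc 1 k, h (ξ i ω)

/-- One of the two reinforced index sequences of a Type-II elephant random walk. The initial
index plays no role in the limit and is left free. -/
structure IsERW (μ : Measure Ω) (m : ℕ) (p : ℝ) (ξ : ℕ → Ω → Fin m) : Prop where
  two_le : 2 ≤ m
  p_nonneg : 0 ≤ p
  p_le_one : p ≤ 1
  meas : ∀ n, Measurable (ξ n)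
  cond : ∀ n : ℕ, 1 ≤ n → ∀ j : Fin m,
    (μ[(fun ω => if ξ (n + 1) ω = j then (1 : ℝ) else 0) | stepFiltration ξ n]) =ᵐ[μ]
      stepProb p ξ n j

lemma stepFiltration_le (hξ : ∀ n, Measurable (ξ n)) (n : ℕ) : stepFiltration ξ n ≤ mΩ := by
  refine iSup₂_le fun k _ => ?_
  exact (hξ k).comap_le

lemma measurable_stepFiltration {k n : ℕ} (hk : k ∈ Finset.Icc 1 n) :
    Measurable[stepFiltration ξ n] (ξ k) := by
  refine Measurable.mono (comap_measurable (ξ k)) ?_ le_rfl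
  exact le_iSup₂ (f := fun k (_ : k ∈ Finset.Icc 1 n) => MeasurableSpace.comap (ξ k) ⊤) k hk

lemma measurable_stepSum {n k : ℕ} (hkn : k ≤ n) (h : Fin m → ℝ) :
    Measurable[stepFiltration ξ n] (stepSum ξ h k) := by
  refine @Finset.measurable_sum _ _ _ _ _ _ (stepFiltration ξ n) _ _ fun i hi => ?_
  refine (measurable_of_countable h).comp (measurable_stepFiltration ?_)
  simp only [Finset.mem_Icc] at hi ⊢
  omega

lemma stepProb_nonneg (hm : 2 ≤ m) (h0 : 0 ≤ p) (h1 : p ≤ 1) (k : ℕ) (j : Fin m) (ω : Ω) :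
    0 ≤ stepProb p ξ k j ω := by
  have : (2 : ℝ) ≤ m := by exact_mod_cast hm
  have h2 : 0 ≤ (1 - p) / ((m : ℝ) - 1) := div_nonneg (by linarith) (by linarith)
  refine mul_nonneg (by positivity) (Finset.sum_nonneg fun i _ => ?_)
  split_ifs <;> simp [h0, h2]

/-- For a function `h` of the indices with zero sum, the conditional mean of `h (ξ (k + 1))` is
`a / k` times the sum of the first `k` values. -/
lemma sum_stepProb_mul (hm : 2 ≤ m) {a : ℝ} (ha : a = ((m : ℝ) * p - 1) / ((m : ℝ) - 1))
    (k : ℕ) (ω : Ω) {h : Fin m → ℝ} (hh : ∑ j, h j = 0) :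
    ∑ j, stepProb p ξ k j ω * h j = a / k * stepSum ξ h k ω := by
  have h2 : (2 : ℝ) ≤ m := by exact_mod_cast hm
  have hm1 : (m : ℝ) - 1 ≠ 0 := by linarith
  have key : ∀ i, ∑ j, (p * (if ξ i ω = j then (1 : ℝ) else 0)
      + ((1 - p) / ((m : ℝ) - 1)) * (if ξ i ω = j then (0 : ℝ) else 1)) * h j
      = a * h (ξ i ω) := by
    intro i
    have : ∀ j, (p * (if ξ i ω = j then (1 : ℝ) else 0)
      + ((1 - p) / ((m : ℝ) - 1)) * (if ξ i ω = j then (0 : ℝ) else 1)) * h j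
      = a * (if ξ i ω = j then h j else 0) + ((1 - p) / ((m : ℝ) - 1)) * h j := by
      intro j
      subst ha
      split_ifs <;> field_simp <;> ring
    simp only [this, Finset.sum_add_distrib, ← Finset.mul_sum, hh]
    simp
  simp only [stepProb, stepSum, mul_assoc, Finset.sum_mul, Finset.mul_sum] at key ⊢
  rw [Finset.sum_comm]
  refine Finset.sum_congr rfl fun i _ => ?_
  rw [← Finset.mul_sum]
  have := key i
  rw [this]; ring

lemma sum_stepProb (hm : 2 ≤ m) {k : ℕ} (hk : 1 ≤ k) (ω : Ω) :
    ∑ j, stepProb p ξ k j ω = 1 := by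
  have h2 : (2 : ℝ) ≤ m := by exact_mod_cast hm
  have hm1 : (m : ℝ) - 1 ≠ 0 := by linarith
  have key : ∀ i, ∑ j, (p * (if ξ i ω = j then (1 : ℝ) else 0)
      + ((1 - p) / ((m : ℝ) - 1)) * (if ξ i ω = j then (0 : ℝ) else 1)) = 1 := by
    intro i
    have : ∀ j, (p * (if ξ i ω = j then (1 : ℝ) else 0)
      + ((1 - p) / ((m : ℝ) - 1)) * (if ξ i ω = j then (0 : ℝ) else 1))
      = (p - (1 - p) / ((m : ℝ) - 1)) * (if ξ i ω = j then 1 else 0)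
        + ((1 - p) / ((m : ℝ) - 1)) := by
      intro j
      split_ifs <;> ring
    simp only [this, Finset.sum_add_distrib, ← Finset.mul_sum]
    simp
    field_simp
    ring
  simp only [stepProb]
  rw [← Finset.mul_sum, Finset.sum_comm, Finset.sum_congr rfl fun i _ => key i]
  have : (k : ℝ) ≠ 0 := by positivity
  simp [this]

/-- The deviation of the conditional law from the uniform one. -/
lemma stepProb_sub (hm : 2 ≤ m) {a : ℝ} (ha : a = ((m : ℝ) * p - 1) / ((m : ℝ) - 1))
    {k : ℕ} (hk : 1 ≤ k) (j : Fin m) (ω : Ω) :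
    stepProb p ξ k j ω - (m : ℝ)⁻¹
      = a / k * stepSum ξ (fun i => (if i = j then 1 else 0) - (m : ℝ)⁻¹) k ω := by
  have h2 : (2 : ℝ) ≤ m := by exact_mod_cast hm
  rw [← sum_stepProb_mul hm ha]
  · simp only [mul_sub, Finset.sum_sub_distrib, ← Finset.sum_mul, sum_stepProb hm hk]
    simp
  · simp [Finset.sum_sub_distrib]
    field_simp
    simp

/-- The defining property of the walk in integrated form: in an expectation against a bounded
function `Φ` of the first `k` steps, `g (ξ (k + 1))` may be replaced by its conditional mean. -/
lemma integral_mul_next [IsProbabilityMeasure μ] (H : IsERW μ m p ξ) {k : ℕ} (hk : 1 ≤ k)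
    {Φ : Ω → ℂ} (hΦ : Measurable[stepFiltration ξ k] Φ) {C : ℝ} (hC : ∀ ω, ‖Φ ω‖ ≤ C)
    (g : Fin m → ℂ) :
    ∫ ω, Φ ω * g (ξ (k + 1) ω) ∂μ = ∫ ω, Φ ω * ∑ j, (stepProb p ξ k j ω : ℂ) * g j ∂μ := by
  have hle := stepFiltration_le H.meas k
  have hΦ' : Measurable Φ := hΦ.mono hle le_rfl
  have hΦi : Integrable Φ μ := Integrable.of_bound hΦ'.aestronglyMeasurable C (.of_forall hC)
  have hind : ∀ j, Measurable (fun ω => if ξ (k + 1) ω = j then (1 : ℝ) else 0) := fun j =>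
    (measurable_of_countable (fun i : Fin m => if i = j then (1 : ℝ) else 0)).comp (H.meas (k+1))
  have hindi : ∀ j, Integrable (fun ω => if ξ (k + 1) ω = j then (1 : ℝ) else 0) μ := fun j =>
    Integrable.of_bound (hind j).aestronglyMeasurable 1
      (.of_forall fun ω => by split_ifs <;> simp)
  have hprod : ∀ j, Integrable ((fun ω => if ξ (k + 1) ω = j then (1 : ℝ) else 0) • Φ) μ :=
    fun j => Integrable.of_bound (((hind j).smul hΦ').aestronglyMeasurable) C
      (.of_forall fun ω => by
        have h0 : (0 : ℝ) ≤ C := (norm_nonneg _).trans (hC ω)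
        simp only [Pi.smul_apply']
        split_ifs <;> simp [hC ω, h0])
  have hprod' : ∀ j, Integrable (fun ω => (if ξ (k + 1) ω = j then (1 : ℝ) else 0) • Φ ω) μ :=
    hprod
  have key : ∀ j, ∫ ω, (if ξ (k + 1) ω = j then (1 : ℝ) else 0) • Φ ω ∂μ
      = ∫ ω, stepProb p ξ k j ω • Φ ω ∂μ ∧ Integrable (fun ω => stepProb p ξ k j ω • Φ ω) μ := by
    intro j
    have h1 := condExp_smul_of_aestronglyMeasurable_right (m := stepFiltration ξ k) (hindi j)
      (hprod j) hΦ.stronglyMeasurable.aestronglyMeasurable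
    have h2 : (μ[(fun ω => if ξ (k + 1) ω = j then (1 : ℝ) else 0) | stepFiltration ξ k] • Φ)
        =ᵐ[μ] fun ω => stepProb p ξ k j ω • Φ ω := by
      filter_upwards [H.cond k hk j] with ω hω
      simp only [Pi.smul_apply', hω]
    refine ⟨?_, (integrable_condExp.congr h1).congr h2⟩
    have h3 := integral_condExp (μ := μ) (f := (fun ω => if ξ (k + 1) ω = j then (1 : ℝ) else 0) • Φ)
      hle
    calc _ = _ := h3.symm
      _ = _ := integral_congr_ae (h1.trans h2)
  have e1 : ∀ ω, Φ ω * g (ξ (k + 1) ω)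
      = ∑ j, ((if ξ (k + 1) ω = j then (1 : ℝ) else 0) • Φ ω) * g j := by
    intro ω
    rw [Finset.sum_eq_single (ξ (k + 1) ω)]
    · simp
    · intro b _ hb
      simp [hb.symm]
    · simp
  have e2 : ∀ ω, Φ ω * ∑ j, (stepProb p ξ k j ω : ℂ) * g j
      = ∑ j, (stepProb p ξ k j ω • Φ ω) * g j := by
    intro ω
    rw [Finset.mul_sum]
    refine Finset.sum_congr rfl fun j _ => ?_
    rw [Complex.real_smul]; ring
  simp_rw [e1, e2]
  rw [integral_finsetSum _ fun j _ => (hprod' j).mul_const (g j),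
    integral_finsetSum _ fun j _ => (key j).2.mul_const (g j)]
  refine Finset.sum_congr rfl fun j _ => ?_
  rw [integral_mul_const, integral_mul_const, (key j).1]

lemma abs_stepSum_le {h : Fin m → ℝ} {K : ℝ} (hK : ∀ j, |h j| ≤ K) (k : ℕ) (ω : Ω) :
    |stepSum ξ h k ω| ≤ k * K := by
  refine (Finset.abs_sum_le_sum_abs _ _).trans ?_
  refine (Finset.sum_le_sum fun i _ => hK (ξ i ω)).trans ?_
  simp

lemma stepSum_succ (h : Fin m → ℝ) (k : ℕ) (ω : Ω) :
    stepSum ξ h (k + 1) ω = stepSum ξ h k ω + h (ξ (k + 1) ω) := by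
  simp [stepSum, Finset.sum_Icc_succ_top]

lemma integrable_of_stepFun [IsProbabilityMeasure μ] {E : Type*} [NormedAddCommGroup E]
    [MeasurableSpace E] [BorelSpace E] [SecondCountableTopology E]
    (H : IsERW μ m p ξ) {k : ℕ} {Φ : Ω → E}
    (hΦ : Measurable[stepFiltration ξ k] Φ) {C : ℝ} (hC : ∀ ω, ‖Φ ω‖ ≤ C) : Integrable Φ μ :=
  Integrable.of_bound (hΦ.mono (stepFiltration_le H.meas k) le_rfl).aestronglyMeasurable C
    (.of_forall hC)

/-- Recursion for the second moment of a zero-sum functional of the indices. -/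
lemma integral_stepSum_sq_succ [IsProbabilityMeasure μ] (H : IsERW μ m p ξ)
    {a : ℝ} (ha : a = ((m : ℝ) * p - 1) / ((m : ℝ) - 1)) {k : ℕ} (hk : 1 ≤ k)
    {h : Fin m → ℝ} (hh : ∑ j, h j = 0) :
    ∫ ω, stepSum ξ h (k + 1) ω ^ 2 ∂μ = (1 + 2 * a / k) * ∫ ω, stepSum ξ h k ω ^ 2 ∂μ
      + ∫ ω, h (ξ (k + 1) ω) ^ 2 ∂μ := by
  obtain ⟨K, hK⟩ : ∃ K, ∀ j, |h j| ≤ K :=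
    ⟨∑ j, |h j|, fun j => Finset.single_le_sum (f := fun j => |h j|)
      (fun _ _ => abs_nonneg _) (Finset.mem_univ j)⟩
  have hc : ∫ ω, stepSum ξ h k ω * h (ξ (k + 1) ω) ∂μ
      = a / k * ∫ ω, stepSum ξ h k ω ^ 2 ∂μ := by
    have := integral_mul_next H hk (Φ := fun ω => (stepSum ξ h k ω : ℂ))
      (Complex.measurable_ofReal.comp (measurable_stepSum le_rfl h)) (C := k * K)
      (fun ω => by simpa using abs_stepSum_le hK k ω) (fun j => (h j : ℂ))
    have e : ∀ ω, ((stepSum ξ h k ω : ℝ) : ℂ) * ∑ j, (stepProb p ξ k j ω : ℂ) * (h j : ℂ)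
        = ((a / k * stepSum ξ h k ω ^ 2 : ℝ) : ℂ) := by
      intro ω
      have := sum_stepProb_mul H.two_le ha k ω hh (ξ := ξ)
      have h3 : ∑ j, (stepProb p ξ k j ω : ℂ) * (h j : ℂ)
        = ((a / k * stepSum ξ h k ω : ℝ) : ℂ) := by rw [← this]; push_cast; rfl
      rw [h3]; push_cast; ring
    simp_rw [e, ← Complex.ofReal_mul] at this
    rw [integral_complex_ofReal, integral_complex_ofReal] at this
    rw [← integral_const_mul]
    exact_mod_cast this
  have i1 : Integrable (fun ω => stepSum ξ h k ω ^ 2) μ :=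
    integrable_of_stepFun H ((measurable_stepSum le_rfl h).pow_const 2) (C := (k * K) ^ 2)
      (fun ω => by
        rw [norm_pow, Real.norm_eq_abs]
        exact pow_le_pow_left₀ (abs_nonneg _) (abs_stepSum_le hK k ω) 2)
  have hm2 : Measurable[stepFiltration ξ (k+1)] (fun ω => h (ξ (k + 1) ω)) :=
    (measurable_of_countable h).comp (measurable_stepFiltration (by simp))
  have i2 : Integrable (fun ω => stepSum ξ h k ω * h (ξ (k + 1) ω)) μ :=
    integrable_of_stepFun H ((measurable_stepSum (Nat.le_succ k) h).mul hm2) (C := (k * K) * K)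
      (fun ω => by
        rw [norm_mul, Real.norm_eq_abs, Real.norm_eq_abs]
        exact mul_le_mul (abs_stepSum_le hK k ω) (hK _) (abs_nonneg _)
          ((abs_nonneg _).trans (abs_stepSum_le (ξ := ξ) hK k ω)))
  have i3 : Integrable (fun ω => h (ξ (k + 1) ω) ^ 2) μ :=
    integrable_of_stepFun H (hm2.pow_const 2) (C := K ^ 2)
      (fun ω => by
        rw [norm_pow, Real.norm_eq_abs]
        exact pow_le_pow_left₀ (abs_nonneg _) (hK _) 2)
  have e : ∀ ω, stepSum ξ h (k + 1) ω ^ 2 = stepSum ξ h k ω ^ 2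
      + 2 * (stepSum ξ h k ω * h (ξ (k + 1) ω)) + h (ξ (k + 1) ω) ^ 2 := by
    intro ω; rw [stepSum_succ]; ring
  simp_rw [e]
  rw [integral_add (by exact i1.add (i2.const_mul 2)) i3, integral_add i1 (i2.const_mul 2),
    integral_const_mul, hc]
  ring

/-- In the diffusive regime `a < 1 / 2` the second moment grows at most linearly. -/
lemma exists_integral_stepSum_sq_le [IsProbabilityMeasure μ] (H : IsERW μ m p ξ)
    {a : ℝ} (ha : a = ((m : ℝ) * p - 1) / ((m : ℝ) - 1)) (ha2 : a < 1 / 2)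
    {h : Fin m → ℝ} (hh : ∑ j, h j = 0) :
    ∃ K, 0 ≤ K ∧ ∀ k : ℕ, 1 ≤ k → ∫ ω, stepSum ξ h k ω ^ 2 ∂μ ≤ K * k := by
  obtain ⟨L, hL⟩ : ∃ K, ∀ j, |h j| ≤ K :=
    ⟨∑ j, |h j|, fun j => Finset.single_le_sum (f := fun j => |h j|)
      (fun _ _ => abs_nonneg _) (Finset.mem_univ j)⟩
  set b := max 0 (2 * a) with hb
  have hb0 : 0 ≤ b := le_max_left _ _
  have hb1 : b < 1 := max_lt one_pos (by linarith)
  have hsq : ∀ k, ∫ ω, h (ξ k ω) ^ 2 ∂μ ≤ L ^ 2 := by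
    intro k
    have : ∫ ω, h (ξ k ω) ^ 2 ∂μ ≤ ∫ _, L ^ 2 ∂μ := by
      refine integral_mono_of_nonneg (.of_forall fun _ => sq_nonneg _) (integrable_const _)
        (.of_forall fun ω => ?_)
      exact sq_le_sq' (by have := hL (ξ k ω); rw [abs_le] at this; linarith)
        (by have := hL (ξ k ω); rw [abs_le] at this; linarith)
    simpa using this
  have hK : L ^ 2 ≤ L ^ 2 / (1 - b) := by
    rw [le_div_iff₀ (by linarith)]
    nlinarith [sq_nonneg L]
  -- `K = L² / (1 - b)` is the fixed point of the induction step: `K b + L² = K`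
  refine ⟨L ^ 2 / (1 - b), div_nonneg (sq_nonneg _) (by linarith), fun k hk => ?_⟩
  induction k, hk using Nat.le_induction with
  | base =>
    simp only [stepSum, Finset.Icc_self, Finset.sum_singleton, Nat.cast_one, mul_one]
    exact (hsq 1).trans hK
  | succ k hk ih =>
    rw [integral_stepSum_sq_succ H ha hk hh]
    have hk0 : (0 : ℝ) < k := by positivity
    have hy : 0 ≤ ∫ ω, stepSum ξ h k ω ^ 2 ∂μ := integral_nonneg fun _ => sq_nonneg _
    have h1 : (1 + 2 * a / k) ≤ 1 + b / k := by
      gcongr; exact le_max_right _ _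
    have h2 : (0 : ℝ) ≤ 1 + b / k := by positivity
    calc _ ≤ (1 + b / k) * (L ^ 2 / (1 - b) * k) + L ^ 2 :=
          add_le_add ((mul_le_mul_of_nonneg_right h1 hy).trans
            (mul_le_mul_of_nonneg_left ih h2)) (hsq _)
      _ = _ := by
        have : (1 - b) ≠ 0 := by linarith
        push_cast
        field_simp
        ring

/-- Expected total deviation of the conditional law of step `k + 1` from the uniform law. -/
def meanDev (μ : Measure Ω) (p : ℝ) (ξ : ℕ → Ω → Fin m) (k : ℕ) : ℝ :=
  ∫ ω, ∑ j, |stepProb p ξ k j ω - (m : ℝ)⁻¹| ∂μ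

lemma measurable_stepProb (k : ℕ) (j : Fin m) :
    Measurable[stepFiltration ξ k] (stepProb p ξ k j) := by
  refine Measurable.const_mul ?_ _
  refine @Finset.measurable_sum _ _ _ _ _ _ (stepFiltration ξ k) _ _ fun i hi => ?_
  exact (measurable_of_countable (fun x : Fin m => p * (if x = j then (1 : ℝ) else 0)
      + ((1 - p) / ((m : ℝ) - 1)) * (if x = j then (0 : ℝ) else 1))).comp
      (measurable_stepFiltration hi)

lemma measurable_abs_stepProb_sub (k : ℕ) (j : Fin m) (c : ℝ) :
    Measurable[stepFiltration ξ k] (fun ω => |stepProb p ξ k j ω - c|) :=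
  (show Continuous (fun x : ℝ => |x - c|) by fun_prop).measurable.comp (measurable_stepProb k j)

/-- The law of large numbers `stepProb → 1 / m`, in mean. -/
lemma tendsto_meanDev [IsProbabilityMeasure μ] (H : IsERW μ m p ξ)
    {a : ℝ} (ha : a = ((m : ℝ) * p - 1) / ((m : ℝ) - 1)) (ha2 : a < 1 / 2) :
    Tendsto (meanDev μ p ξ) atTop (𝓝 0) := by
  have h2 : (2 : ℝ) ≤ m := by exact_mod_cast H.two_le
  have hz : ∀ j : Fin m, ∑ i : Fin m, ((if i = j then (1 : ℝ) else 0) - (m : ℝ)⁻¹) = 0 := by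
    intro j
    simp [Finset.sum_sub_distrib]
    field_simp
    simp
  have hj : ∀ j : Fin m, Tendsto (fun k => ∫ ω, |stepProb p ξ k j ω - (m : ℝ)⁻¹| ∂μ) atTop
      (𝓝 0) := by
    intro j
    obtain ⟨K, hK0, hK⟩ := exists_integral_stepSum_sq_le H ha ha2 (hz j)
    have hlim : Tendsto (fun k : ℕ => Real.sqrt (a ^ 2 * K * (1 / (k : ℝ)))) atTop (𝓝 0) := by
      have := (tendsto_one_div_atTop_nhds_zero_nat (𝕜 := ℝ)).const_mul (a ^ 2 * K)
      have := (Real.continuous_sqrt.tendsto _).comp this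
      simpa [Function.comp_def] using this
    refine tendsto_of_tendsto_of_tendsto_of_le_of_le' tendsto_const_nhds hlim
      (.of_forall fun k => integral_nonneg fun _ => abs_nonneg _) ?_
    filter_upwards [eventually_ge_atTop 1] with k hk
    have hk0 : (0 : ℝ) < k := by positivity
    refine Real.le_sqrt_of_sq_le ?_
    set X : Ω → ℝ := fun ω => |stepProb p ξ k j ω - (m : ℝ)⁻¹| with hX
    have hXm : Measurable[stepFiltration ξ k] X :=
      measurable_abs_stepProb_sub k j _
    have hXe : ∀ ω, X ω ^ 2
        = (a / k) ^ 2 * stepSum ξ (fun i => (if i = j then 1 else 0) - (m : ℝ)⁻¹) k ω ^ 2 := by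
      intro ω
      rw [hX]
      simp only [sq_abs]
      rw [stepProb_sub H.two_le ha hk]; ring
    have hmem : MemLp X 2 μ := by
      refine MemLp.of_bound (hXm.mono (stepFiltration_le H.meas k) le_rfl).aestronglyMeasurable
        (|a / k| * (k * 2)) (.of_forall fun ω => ?_)
      simp only [hX, Real.norm_eq_abs, abs_abs]
      rw [stepProb_sub H.two_le ha hk, abs_mul]
      gcongr
      refine abs_stepSum_le (fun i => ?_) k ω
      have : (m : ℝ)⁻¹ ≤ 1 := inv_le_one_of_one_le₀ (by linarith)
      have : 0 ≤ (m : ℝ)⁻¹ := by positivity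
      rw [abs_le]
      split_ifs <;> constructor <;> linarith
    -- `(𝔼 X)² ≤ 𝔼 X²`, as the variance is nonnegative
    have hvar := variance_nonneg X μ
    rw [variance_eq_sub hmem] at hvar
    have : ∫ ω, (X ^ 2) ω ∂μ ≤ a ^ 2 * K * (1 / k) := by
      simp only [Pi.pow_apply, hXe]
      rw [integral_const_mul]
      refine (mul_le_mul_of_nonneg_left (hK k hk) (sq_nonneg _)).trans (le_of_eq ?_)
      field_simp
    linarith
  have hs : Tendsto (fun k => ∑ j, ∫ ω, |stepProb p ξ k j ω - (m : ℝ)⁻¹| ∂μ) atTop (𝓝 0) := by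
    simpa using tendsto_finsetSum Finset.univ fun j _ => hj j
  refine hs.congr' ?_
  filter_upwards [eventually_ge_atTop 1] with k hk
  rw [meanDev, integral_finsetSum]
  intro j _
  refine integrable_of_stepFun H (measurable_abs_stepProb_sub k j _) (C := 2)
    (fun ω => ?_)
  have h5 : stepProb p ξ k j ω ≤ 1 := by
    rw [← sum_stepProb H.two_le hk ω (p := p) (ξ := ξ)]
    exact Finset.single_le_sum (f := fun j => stepProb p ξ k j ω)
      (fun i _ => stepProb_nonneg H.two_le H.p_nonneg H.p_le_one k i ω) (Finset.mem_univ j)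
  have h6 := stepProb_nonneg H.two_le H.p_nonneg H.p_le_one k j ω (ξ := ξ)
  have : (m : ℝ)⁻¹ ≤ 1 := inv_le_one_of_one_le₀ (by linarith)
  have : 0 ≤ (m : ℝ)⁻¹ := by positivity
  rw [Real.norm_eq_abs, abs_abs, abs_le]
  constructor <;> linarith

/-! ### One step of the characteristic function recursion -/

lemma norm_exp_taylor_le (y : ℝ) :
    ‖Complex.exp (Complex.I * y) - (1 + Complex.I * y - (y : ℂ) ^ 2 / 2)‖ ≤ 4 * |y| ^ 3 := by
  rcases le_total |y| 1 with h | h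
  · have hn : ‖Complex.I * (y : ℂ)‖ = |y| := by simp
    have := Complex.exp_bound (x := Complex.I * y) (by rw [hn]; exact h) (n := 3) (by norm_num)
    rw [hn] at this
    have e : ∑ i ∈ Finset.range 3, (Complex.I * (y : ℂ)) ^ i / (i.factorial : ℂ)
        = 1 + Complex.I * y - (y : ℂ) ^ 2 / 2 := by
      simp [Finset.sum_range_succ, mul_pow, Nat.factorial]
      ring
    rw [e] at this
    refine this.trans ?_
    have h3 : 0 ≤ |y| ^ 3 := by positivity
    norm_num [Nat.factorial]
    linarith
  · have h1 : ‖Complex.exp (Complex.I * y)‖ = 1 := by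
      rw [mul_comm]; exact Complex.norm_exp_ofReal_mul_I y
    have h2 : ‖(1 + Complex.I * y - (y : ℂ) ^ 2 / 2)‖ ≤ 1 + |y| + |y| ^ 2 / 2 := by
      refine (norm_sub_le _ _).trans (add_le_add ((norm_add_le _ _).trans ?_) ?_)
      · simp
      · simp
    have hy2 : 1 ≤ |y| ^ 2 := one_le_pow₀ h
    have hy3 : |y| ^ 2 ≤ |y| ^ 3 := pow_le_pow_right₀ h (by norm_num)
    have hy1 : |y| ≤ |y| ^ 3 := le_self_pow₀ h (by norm_num)
    refine (norm_sub_le _ _).trans ?_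
    rw [h1]
    linarith

lemma abs_exp_neg_sub_le {x : ℝ} (hx : 0 ≤ x) : |Real.exp (-x) - (1 - x)| ≤ x ^ 2 := by
  rcases le_total x 1 with h | h
  · have := Real.abs_exp_sub_one_sub_id_le (x := -x) (by rw [abs_neg, abs_of_nonneg hx]; exact h)
    rw [neg_sq] at this
    convert this using 2
    ring
  · have h1 : Real.exp (-x) ≤ 1 := Real.exp_le_one_iff.2 (by linarith)
    have h2 := Real.exp_pos (-x)
    rw [abs_le]
    constructor <;> nlinarith

/-- The normalised quadratic form `(1 / m) ∑ h_j²`: the variance of a zero-sum function `h` under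
the uniform law. -/
def unifVar (h : Fin m → ℝ) : ℝ := (m : ℝ)⁻¹ * ∑ j, h j ^ 2

lemma unifVar_nonneg (h : Fin m → ℝ) : 0 ≤ unifVar h :=
  mul_nonneg (by positivity) (Finset.sum_nonneg fun _ _ => sq_nonneg _)

/-- Second order expansion of the characteristic function of `h` under a probability vector `P`
close to the uniform one, with the drift `∑ P h` kept in the exponent. -/
lemma norm_sum_exp_sub_le (hm : 2 ≤ m) {P h : Fin m → ℝ} (hP0 : ∀ j, 0 ≤ P j) (hP1 : ∑ j, P j = 1)
    (hh : ∑ j, h j = 0) {K : ℝ} (hK : ∀ j, |h j| ≤ K) :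
    ‖∑ j, (P j : ℂ) * Complex.exp (Complex.I * (h j : ℂ))
      - Complex.exp (Complex.I * ((∑ j, P j * h j : ℝ) : ℂ))
        * Complex.exp (-(unifVar h : ℂ) / 2)‖
      ≤ 2 * K ^ 2 * ∑ j, |P j - (m : ℝ)⁻¹| + 32 * K ^ 3 + K ^ 4 := by
  have hm0 : (2 : ℝ) ≤ m := by exact_mod_cast hm
  have hK0 : 0 ≤ K := (abs_nonneg _).trans (hK ⟨0, by omega⟩)
  set b := ∑ j, P j * h j with hb
  set v := unifVar h with hv
  set Q := ∑ j, |P j - (m : ℝ)⁻¹| with hQ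
  have hv0 : 0 ≤ v := unifVar_nonneg h
  have hsq : ∀ j, h j ^ 2 ≤ K ^ 2 := fun j => by
    rw [← sq_abs]; exact pow_le_pow_left₀ (abs_nonneg _) (hK j) 2
  have hvK : v ≤ K ^ 2 := by
    rw [hv, unifVar]
    have : ∑ j, h j ^ 2 ≤ m * K ^ 2 := by
      refine (Finset.sum_le_sum fun j _ => hsq j).trans ?_
      simp
    calc (m : ℝ)⁻¹ * ∑ j, h j ^ 2 ≤ (m : ℝ)⁻¹ * (m * K ^ 2) := by gcongr
      _ = K ^ 2 := by field_simp
  have hbK : |b| ≤ K := by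
    refine (Finset.abs_sum_le_sum_abs _ _).trans ?_
    calc ∑ j, |P j * h j| ≤ ∑ j, P j * K := by
          refine Finset.sum_le_sum fun j _ => ?_
          rw [abs_mul, abs_of_nonneg (hP0 j)]
          exact mul_le_mul_of_nonneg_left (hK j) (hP0 j)
      _ = K := by rw [← Finset.sum_mul, hP1, one_mul]
  have hQ0 : 0 ≤ Q := Finset.sum_nonneg fun _ _ => abs_nonneg _
  have hQ2 : Q ≤ 2 := by
    calc Q ≤ ∑ j : Fin m, (P j + (m : ℝ)⁻¹) := by
          refine Finset.sum_le_sum fun j _ => ?_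
          have : 0 ≤ (m : ℝ)⁻¹ := by positivity
          rw [abs_le]; constructor <;> linarith [hP0 j]
      _ = 2 := by
          rw [Finset.sum_add_distrib, hP1]
          simp only [Finset.sum_const, Finset.card_univ, Fintype.card_fin, nsmul_eq_mul]
          rw [mul_inv_cancel₀ (by linarith)]; norm_num
  have hV : |∑ j, P j * (h j - b) ^ 2 - v| ≤ 3 * K ^ 2 * Q := by
    have e1 : ∑ j, P j * (h j - b) ^ 2 = ∑ j, P j * h j ^ 2 - b ^ 2 := by
      have : ∀ j, P j * (h j - b) ^ 2 = P j * h j ^ 2 - 2 * b * (P j * h j) + b ^ 2 * P j := by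
        intro j; ring
      simp only [this, Finset.sum_add_distrib, Finset.sum_sub_distrib, ← Finset.mul_sum, hP1, ← hb]
      ring
    have e2 : ∑ j, P j * h j ^ 2 - v = ∑ j, (P j - (m : ℝ)⁻¹) * h j ^ 2 := by
      rw [hv, unifVar, Finset.mul_sum, ← Finset.sum_sub_distrib]
      exact Finset.sum_congr rfl fun j _ => by ring
    have e3 : b = ∑ j, (P j - (m : ℝ)⁻¹) * h j := by
      simp only [sub_mul, Finset.sum_sub_distrib, ← Finset.mul_sum, hh]
      simp [hb]
    have f1 : |∑ j, (P j - (m : ℝ)⁻¹) * h j ^ 2| ≤ K ^ 2 * Q := by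
      refine (Finset.abs_sum_le_sum_abs _ _).trans ?_
      rw [hQ, Finset.mul_sum]
      refine Finset.sum_le_sum fun j _ => ?_
      rw [abs_mul, abs_of_nonneg (sq_nonneg (h j)), mul_comm]
      exact mul_le_mul_of_nonneg_right (hsq j) (abs_nonneg _)
    have f2 : |b| ≤ K * Q := by
      rw [e3]
      refine (Finset.abs_sum_le_sum_abs _ _).trans ?_
      rw [hQ, Finset.mul_sum]
      refine Finset.sum_le_sum fun j _ => ?_
      rw [abs_mul, mul_comm]
      exact mul_le_mul_of_nonneg_right (hK j) (abs_nonneg _)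
    have f3 : b ^ 2 ≤ 2 * K ^ 2 * Q := by
      rw [← sq_abs]
      calc |b| ^ 2 ≤ (K * Q) ^ 2 := pow_le_pow_left₀ (abs_nonneg _) f2 2
        _ = K ^ 2 * Q * Q := by ring
        _ ≤ K ^ 2 * Q * 2 := by gcongr
        _ = _ := by ring
    have e4 : ∑ j, P j * (h j - b) ^ 2 - v = ∑ j, (P j - (m : ℝ)⁻¹) * h j ^ 2 - b ^ 2 := by
      rw [e1, ← e2]; ring
    rw [e4]
    rw [abs_le] at f1 ⊢
    constructor <;> nlinarith [sq_nonneg b]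
  -- the drift `b` is factored out, so that `h - b` is centred under `P` in the Taylor expansion
  have hfac : ∑ j, (P j : ℂ) * Complex.exp (Complex.I * (h j : ℂ))
      - Complex.exp (Complex.I * (b : ℂ)) * Complex.exp (-(v : ℂ) / 2)
      = Complex.exp (Complex.I * (b : ℂ)) *
        (∑ j, (P j : ℂ) * Complex.exp (Complex.I * ((h j - b : ℝ) : ℂ))
          - Complex.exp (-(v : ℂ) / 2)) := by
    rw [mul_sub, Finset.mul_sum]
    congr 1
    refine Finset.sum_congr rfl fun j _ => ?_
    have : Complex.exp (Complex.I * (h j : ℂ)) = Complex.exp (Complex.I * (b : ℂ)) *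
        Complex.exp (Complex.I * ((h j - b : ℝ) : ℂ)) := by
      rw [← Complex.exp_add]; congr 1; push_cast; ring
    rw [this]; ring
  have hunit : ‖Complex.exp (Complex.I * (b : ℂ))‖ = 1 := by
    rw [mul_comm]; exact Complex.norm_exp_ofReal_mul_I b
  rw [hfac, norm_mul, hunit, one_mul]
  have hmean : ∑ j, P j * (h j - b) = 0 := by
    simp only [mul_sub, Finset.sum_sub_distrib, ← Finset.sum_mul, hP1, ← hb]; ring
  have hdec : ∑ j, (P j : ℂ) * Complex.exp (Complex.I * ((h j - b : ℝ) : ℂ))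
          - Complex.exp (-(v : ℂ) / 2)
      = ∑ j, (P j : ℂ) * (Complex.exp (Complex.I * ((h j - b : ℝ) : ℂ))
          - (1 + Complex.I * ((h j - b : ℝ) : ℂ) - ((h j - b : ℝ) : ℂ) ^ 2 / 2))
        + ((-(∑ j, P j * (h j - b) ^ 2 - v) / 2 : ℝ) : ℂ)
        - ((Real.exp (-(v / 2)) - (1 - v / 2) : ℝ) : ℂ) := by
    have e5 : ∑ j, (P j : ℂ) * (1 + Complex.I * ((h j - b : ℝ) : ℂ) - ((h j - b : ℝ) : ℂ) ^ 2 / 2)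
        = ((1 - (∑ j, P j * (h j - b) ^ 2) / 2 : ℝ) : ℂ) := by
      have : ∀ j, (P j : ℂ) * (1 + Complex.I * ((h j - b : ℝ) : ℂ) - ((h j - b : ℝ) : ℂ) ^ 2 / 2)
          = (P j : ℂ) + Complex.I * ((P j * (h j - b) : ℝ) : ℂ)
            - ((P j * (h j - b) ^ 2 : ℝ) : ℂ) / 2 := by
        intro j; push_cast; ring
      simp only [this, Finset.sum_add_distrib, Finset.sum_sub_distrib, ← Finset.mul_sum,
        ← Finset.sum_div, ← Complex.ofReal_sum, hP1, hmean]
      push_cast; ring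
    simp only [mul_sub (Complex.ofReal _), Finset.sum_sub_distrib] at e5 ⊢
    rw [e5]
    push_cast
    rw [show (-(v : ℂ) / 2) = -((v : ℂ) / 2) by ring]
    ring
  rw [hdec]
  have g1 : ‖∑ j, (P j : ℂ) * (Complex.exp (Complex.I * ((h j - b : ℝ) : ℂ))
          - (1 + Complex.I * ((h j - b : ℝ) : ℂ) - ((h j - b : ℝ) : ℂ) ^ 2 / 2))‖ ≤ 32 * K ^ 3 := by
    calc _ ≤ ∑ j, P j * (32 * K ^ 3) := by
          refine norm_sum_le_of_le _ fun j _ => ?_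
          rw [norm_mul, Complex.norm_real, Real.norm_of_nonneg (hP0 j)]
          refine mul_le_mul_of_nonneg_left ((norm_exp_taylor_le _).trans ?_) (hP0 j)
          have : |h j - b| ≤ 2 * K := (abs_sub _ _).trans (by linarith [hK j])
          calc 4 * |h j - b| ^ 3 ≤ 4 * (2 * K) ^ 3 := by gcongr
            _ = _ := by ring
      _ = _ := by rw [← Finset.sum_mul, hP1, one_mul]
  have g2 : ‖((-(∑ j, P j * (h j - b) ^ 2 - v) / 2 : ℝ) : ℂ)‖ ≤ 2 * K ^ 2 * Q := by
    rw [Complex.norm_real, Real.norm_eq_abs, abs_div, abs_neg, abs_two]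
    have : 0 ≤ K ^ 2 * Q := by positivity
    linarith
  have g3 : ‖((Real.exp (-(v / 2)) - (1 - v / 2) : ℝ) : ℂ)‖ ≤ K ^ 4 := by
    rw [Complex.norm_real, Real.norm_eq_abs]
    refine (abs_exp_neg_sub_le (by linarith)).trans ?_
    calc (v / 2) ^ 2 ≤ (K ^ 2) ^ 2 := pow_le_pow_left₀ (by linarith) (by linarith) 2
      _ = _ := by ring
  refine (norm_sub_le _ _).trans ((add_le_add ((norm_add_le _ _).trans
    (add_le_add g1 g2)) g3).trans (le_of_eq ?_))
  ring

/-- The error made in one step of the recursion. -/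
def stepErr (r K : ℝ) : ℝ := 2 * K ^ 2 * r + 32 * K ^ 3 + K ^ 4

lemma measurable_cexp_stepSum {n k : ℕ} (hkn : k ≤ n) (h : Fin m → ℝ) :
    Measurable[stepFiltration ξ n] (fun ω => Complex.exp (Complex.I * (stepSum ξ h k ω : ℂ))) :=
  (show Continuous (fun x : ℝ => Complex.exp (Complex.I * (x : ℂ))) by fun_prop).measurable.comp
    (measurable_stepSum hkn h)

lemma norm_cexp_I_mul (x : ℝ) : ‖Complex.exp (Complex.I * (x : ℂ))‖ = 1 := by
  rw [mul_comm]; exact Complex.norm_exp_ofReal_mul_I x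

lemma measurable_mul_cexp {n k : ℕ} (hkn : k ≤ n) {Φ : Ω → ℂ}
    (hΦ : Measurable[stepFiltration ξ n] Φ) (h : Fin m → ℝ) :
    Measurable[stepFiltration ξ n]
      (fun ω => Φ ω * Complex.exp (Complex.I * (stepSum ξ h k ω : ℂ))) :=
  Measurable.mul hΦ (measurable_cexp_stepSum hkn h)

lemma norm_mul_cexp_le {Φ : Ω → ℂ} (hΦ1 : ∀ ω, ‖Φ ω‖ ≤ 1) (h : Fin m → ℝ) (k : ℕ) (ω : Ω) :
    ‖Φ ω * Complex.exp (Complex.I * (stepSum ξ h k ω : ℂ))‖ ≤ 1 := by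
  rw [norm_mul, norm_cexp_I_mul, mul_one]; exact hΦ1 ω

lemma stepSum_const_mul (c : ℝ) (h : Fin m → ℝ) (k : ℕ) (ω : Ω) :
    stepSum ξ (fun j => c * h j) k ω = c * stepSum ξ h k ω := by
  simp [stepSum, Finset.mul_sum]

/-- Conditioning on the first `k` steps turns `h` at time `k + 1` into `(1 + a / k) h` at time `k`
and produces a Gaussian factor. -/
lemma norm_integral_step_le [IsProbabilityMeasure μ] (H : IsERW μ m p ξ)
    {a : ℝ} (ha : a = ((m : ℝ) * p - 1) / ((m : ℝ) - 1)) {k : ℕ} (hk : 1 ≤ k)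
    {Φ : Ω → ℂ} (hΦ : Measurable[stepFiltration ξ k] Φ) (hΦ1 : ∀ ω, ‖Φ ω‖ ≤ 1)
    {h : Fin m → ℝ} (hh : ∑ j, h j = 0) {K : ℝ} (hK : ∀ j, |h j| ≤ K) :
    ‖∫ ω, Φ ω * Complex.exp (Complex.I * (stepSum ξ h (k + 1) ω : ℂ)) ∂μ
      - (∫ ω, Φ ω * Complex.exp (Complex.I * (stepSum ξ (fun j => (1 + a / k) * h j) k ω : ℂ)) ∂μ)
        * Complex.exp (-(unifVar h : ℂ) / 2)‖ ≤ stepErr (meanDev μ p ξ k) K := by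
  have hΨ := measurable_mul_cexp le_rfl hΦ h
  have hΨ1 := norm_mul_cexp_le (ξ := ξ) hΦ1 h k
  have e1 : ∫ ω, Φ ω * Complex.exp (Complex.I * (stepSum ξ h (k + 1) ω : ℂ)) ∂μ
      = ∫ ω, (Φ ω * Complex.exp (Complex.I * (stepSum ξ h k ω : ℂ))) *
        ∑ j, (stepProb p ξ k j ω : ℂ) * Complex.exp (Complex.I * (h j : ℂ)) ∂μ := by
    rw [← integral_mul_next H hk hΨ hΨ1 (fun j => Complex.exp (Complex.I * (h j : ℂ)))]
    refine integral_congr_ae (.of_forall fun ω => ?_)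
    simp only [stepSum_succ, Complex.ofReal_add, mul_add, Complex.exp_add]
    ring
  have e2 : ∀ ω, Φ ω * Complex.exp (Complex.I * (stepSum ξ (fun j => (1 + a / k) * h j) k ω : ℂ))
      = (Φ ω * Complex.exp (Complex.I * (stepSum ξ h k ω : ℂ))) *
        Complex.exp (Complex.I * ((∑ j, stepProb p ξ k j ω * h j : ℝ) : ℂ)) := by
    intro ω
    rw [sum_stepProb_mul H.two_le ha k ω hh, stepSum_const_mul, mul_assoc, ← Complex.exp_add]
    congr 2
    push_cast
    ring
  have hPm : ∀ j, Measurable[stepFiltration ξ k] (fun ω => (stepProb p ξ k j ω : ℂ)) := fun j =>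
    Complex.measurable_ofReal.comp (measurable_stepProb k j)
  have hle1 : ∀ j ω, |stepProb p ξ k j ω| ≤ 1 := by
    intro j ω
    rw [abs_of_nonneg (stepProb_nonneg H.two_le H.p_nonneg H.p_le_one k j ω),
      ← sum_stepProb H.two_le hk ω (p := p) (ξ := ξ)]
    exact Finset.single_le_sum (f := fun j => stepProb p ξ k j ω)
      (fun i _ => stepProb_nonneg H.two_le H.p_nonneg H.p_le_one k i ω) (Finset.mem_univ j)
  have i1 : Integrable (fun ω => (Φ ω * Complex.exp (Complex.I * (stepSum ξ h k ω : ℂ))) *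
        ∑ j, (stepProb p ξ k j ω : ℂ) * Complex.exp (Complex.I * (h j : ℂ))) μ := by
    simp_rw [Finset.mul_sum]
    refine integrable_finsetSum _ fun j _ => ?_
    refine integrable_of_stepFun H (C := 1)
      (Measurable.mul hΨ ((hPm j).mul_const _)) fun ω => ?_
    rw [norm_mul, norm_mul (stepProb p ξ k j ω : ℂ), norm_cexp_I_mul, Complex.norm_real, mul_one]
    exact mul_le_one₀ (hΨ1 ω) (norm_nonneg _) (hle1 j ω)
  have i2 : Integrable (fun ω => (Φ ω *
      Complex.exp (Complex.I * (stepSum ξ (fun j => (1 + a / k) * h j) k ω : ℂ)))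
        * Complex.exp (-(unifVar h : ℂ) / 2)) μ :=
    (integrable_of_stepFun H (measurable_mul_cexp le_rfl hΦ _)
      (norm_mul_cexp_le hΦ1 _ k)).mul_const _
  have i3 : Integrable (fun ω => ∑ j, |stepProb p ξ k j ω - (m : ℝ)⁻¹|) μ := by
    refine integrable_finsetSum _ fun j _ => integrable_of_stepFun H
      (measurable_abs_stepProb_sub k j _) (C := 1 + (m : ℝ)⁻¹) fun ω => ?_
    rw [Real.norm_eq_abs, abs_abs]
    refine (abs_sub _ _).trans (add_le_add (hle1 j ω) ?_)
    rw [abs_of_nonneg (by positivity)]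
  rw [e1, ← integral_mul_const, ← integral_sub i1 i2]
  have hbound : ∀ ω, ‖(Φ ω * Complex.exp (Complex.I * (stepSum ξ h k ω : ℂ))) *
        ∑ j, (stepProb p ξ k j ω : ℂ) * Complex.exp (Complex.I * (h j : ℂ))
      - (Φ ω * Complex.exp (Complex.I * (stepSum ξ (fun j => (1 + a / k) * h j) k ω : ℂ)))
        * Complex.exp (-(unifVar h : ℂ) / 2)‖
      ≤ 2 * K ^ 2 * ∑ j, |stepProb p ξ k j ω - (m : ℝ)⁻¹| + (32 * K ^ 3 + K ^ 4) := by
    intro ω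
    rw [e2 ω, mul_assoc _ _ (Complex.exp (-(unifVar h : ℂ) / 2)), ← mul_sub, norm_mul]
    have := norm_sum_exp_sub_le H.two_le
      (fun j => stepProb_nonneg H.two_le H.p_nonneg H.p_le_one k j ω)
      (sum_stepProb H.two_le hk ω (p := p) (ξ := ξ)) hh hK
    rw [← add_assoc]
    refine le_trans ?_ this
    exact mul_le_of_le_one_left (norm_nonneg _) (hΨ1 ω)
  refine (norm_integral_le_of_norm_le ((i3.const_mul _).add (integrable_const _))
    (.of_forall hbound)).trans (le_of_eq ?_)
  rw [integral_add' (i3.const_mul _) (integrable_const _), integral_const_mul]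
  simp [stepErr, meanDev]
  ring

/-! ### Iterating the recursion -/

/-- The growth factor `∏_{1 ≤ k < n} (1 + a / k)`. -/
def growth (a : ℝ) (n : ℕ) : ℝ := ∏ k ∈ Finset.Ico 1 n, (1 + a / (k : ℝ))

lemma growth_succ (a : ℝ) {n : ℕ} (hn : 1 ≤ n) : growth a (n + 1) = growth a n * (1 + a / n) := by
  rw [growth, Finset.prod_Ico_succ_top hn]; rfl

lemma one_add_div_pos {a : ℝ} (ha : -1 < a) {k : ℕ} (hk : 1 ≤ k) : 0 < 1 + a / (k : ℝ) := by
  have : (1 : ℝ) ≤ k := by exact_mod_cast hk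
  have h0 : (0 : ℝ) < k := by linarith
  have : 1 + a / (k : ℝ) = (k + a) / k := by field_simp
  rw [this]
  exact div_pos (by linarith) h0

lemma growth_pos {a : ℝ} (ha : -1 < a) (n : ℕ) : 0 < growth a n :=
  Finset.prod_pos fun _ hk => one_add_div_pos ha (Finset.mem_Ico.1 hk).1

lemma stepFiltration_mono {k n : ℕ} (h : k ≤ n) : stepFiltration ξ k ≤ stepFiltration ξ n := by
  refine iSup₂_le fun i hi => ?_
  refine le_iSup₂ (f := fun k (_ : k ∈ Finset.Icc 1 n) => MeasurableSpace.comap (ξ k) ⊤) i ?_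
  simp only [Finset.mem_Icc] at hi ⊢
  omega

lemma unifVar_const_mul (c : ℝ) (h : Fin m → ℝ) :
    unifVar (fun j => c * h j) = c ^ 2 * unifVar h := by
  simp only [unifVar, mul_pow, ← Finset.mul_sum]
  ring

/-- Iteration of `norm_integral_step_le` from time `N` down to time `k₀`. -/
lemma norm_integral_iterate_le [IsProbabilityMeasure μ] (H : IsERW μ m p ξ)
    {a : ℝ} (ha : a = ((m : ℝ) * p - 1) / ((m : ℝ) - 1)) (ha1 : -1 < a) {k₀ : ℕ} (hk₀ : 1 ≤ k₀)
    {Φ : Ω → ℂ} (hΦ : Measurable[stepFiltration ξ k₀] Φ) (hΦ1 : ∀ ω, ‖Φ ω‖ ≤ 1)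
    {N : ℕ} (hN : k₀ ≤ N)
    {h : Fin m → ℝ} (hh : ∑ j, h j = 0) {K : ℝ} (hK : ∀ j, |h j| ≤ K) :
    ‖∫ ω, Φ ω * Complex.exp (Complex.I * (stepSum ξ h N ω : ℂ)) ∂μ
      - (∫ ω, Φ ω * Complex.exp
          (Complex.I * (stepSum ξ (fun j => growth a N / growth a k₀ * h j) k₀ ω : ℂ)) ∂μ)
        * Complex.exp (-((unifVar h * ∑ k ∈ Finset.Ico k₀ N,
            (growth a N / growth a (k + 1)) ^ 2 : ℝ) : ℂ) / 2)‖
      ≤ ∑ k ∈ Finset.Ico k₀ N,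
        stepErr (meanDev μ p ξ k) (growth a N / growth a (k + 1) * K) := by
  induction N, hN using Nat.le_induction generalizing h K with
  | base =>
    have := (growth_pos ha1 k₀).ne'
    simp [this]
  | succ N hN ih =>
    have hN1 : 1 ≤ N := hk₀.trans hN
    have hpos := one_add_div_pos ha1 hN1
    have s1 := norm_integral_step_le H ha hN1 (hΦ.mono (stepFiltration_mono hN) le_rfl) hΦ1 hh hK
    have s2 := ih (h := fun j => (1 + a / N) * h j) (by rw [← Finset.mul_sum, hh, mul_zero])
      (K := (1 + a / N) * K) (fun j => by
        rw [abs_mul, abs_of_pos hpos]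
        exact mul_le_mul_of_nonneg_left (hK j) hpos.le)
    have hg : ∀ k, growth a N / growth a k * (1 + a / N) = growth a (N + 1) / growth a k := by
      intro k; rw [growth_succ a hN1]; ring
    simp only [← mul_assoc, hg, unifVar_const_mul] at s2
    rw [Finset.sum_Ico_succ_top hN, Finset.sum_Ico_succ_top hN,
      div_self (growth_pos ha1 (N + 1)).ne']
    have hv : (1 + a / N) ^ 2 * unifVar h * ∑ k ∈ Finset.Ico k₀ N,
        (growth a N / growth a (k + 1)) ^ 2
        = unifVar h * ∑ k ∈ Finset.Ico k₀ N, (growth a (N + 1) / growth a (k + 1)) ^ 2 := by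
      simp only [← hg, mul_pow, ← Finset.sum_mul]; ring
    rw [hv] at s2
    rw [one_pow, one_mul, mul_add, mul_one]
    set X := ∫ ω, Φ ω * Complex.exp (Complex.I * (stepSum ξ h (N + 1) ω : ℂ)) ∂μ
    set Y := ∫ ω, Φ ω *
      Complex.exp (Complex.I * (stepSum ξ (fun j => (1 + a / N) * h j) N ω : ℂ)) ∂μ
    set Z := ∫ ω, Φ ω * Complex.exp (Complex.I *
      (stepSum ξ (fun j => growth a (N + 1) / growth a k₀ * h j) k₀ ω : ℂ)) ∂μ
    set V := unifVar h * ∑ k ∈ Finset.Ico k₀ N, (growth a (N + 1) / growth a (k + 1)) ^ 2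
    have hE : ‖Complex.exp (-(unifVar h : ℂ) / 2)‖ ≤ 1 := by
      rw [Complex.norm_exp]
      have : (-(unifVar h : ℂ) / 2).re = -(unifVar h) / 2 := by
        have : (-(unifVar h : ℂ) / 2) = ((-(unifVar h) / 2 : ℝ) : ℂ) := by push_cast; rfl
        rw [this, Complex.ofReal_re]
      rw [this]
      exact Real.exp_le_one_iff.2 (by linarith [unifVar_nonneg h])
    have hexp : Complex.exp (-((V + unifVar h : ℝ) : ℂ) / 2)
        = Complex.exp (-(V : ℂ) / 2) * Complex.exp (-(unifVar h : ℂ) / 2) := by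
      rw [← Complex.exp_add]; congr 1; push_cast; ring
    rw [hexp]
    calc ‖X - Z * (Complex.exp (-(V : ℂ) / 2) * Complex.exp (-(unifVar h : ℂ) / 2))‖
        = ‖(Y - Z * Complex.exp (-(V : ℂ) / 2)) * Complex.exp (-(unifVar h : ℂ) / 2)
          + (X - Y * Complex.exp (-(unifVar h : ℂ) / 2))‖ := by congr 1; ring
      _ ≤ ‖Y - Z * Complex.exp (-(V : ℂ) / 2)‖ * 1
          + ‖X - Y * Complex.exp (-(unifVar h : ℂ) / 2)‖ := by
        refine (norm_add_le _ _).trans (add_le_add_left ?_ _)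
        rw [norm_mul]
        exact mul_le_mul_of_nonneg_left hE (norm_nonneg _)
      _ ≤ _ := by rw [mul_one]; exact add_le_add s2 s1


/-! ### Asymptotics of the growth factor -/

lemma growth_mul_factorial (a : ℝ) (n : ℕ) :
    growth a (n + 2) * ((n + 1).factorial : ℝ) = ∏ j ∈ Finset.range (n + 1), (a + 1 + j) := by
  induction n with
  | zero => simp [growth]; ring
  | succ n ih =>
    rw [Finset.prod_range_succ, ← ih, growth_succ a (by omega : 1 ≤ n + 2), Nat.factorial_succ (n + 1)]
    push_cast
    have : (n : ℝ) + 2 ≠ 0 := by positivity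
    field_simp
    ring

/-- Euler's limit formula for `Γ` gives the order of growth `growth a n ∼ n ^ a / Γ (a + 1)`. -/
lemma tendsto_growth_div_rpow {a : ℝ} (ha : -1 < a) :
    Tendsto (fun n : ℕ => growth a n / (n : ℝ) ^ a) atTop (𝓝 (Real.Gamma (a + 1))⁻¹) := by
  have hΓ : Real.Gamma (a + 1) ≠ 0 := (Real.Gamma_pos_of_pos (by linarith)).ne'
  rw [← tendsto_add_atTop_iff_nat 2]
  have h1 := (Real.GammaSeq_tendsto_Gamma (a + 1)).inv₀ hΓ
  have h2 : Tendsto (fun n : ℕ => (n : ℝ) / ((n : ℝ) + 1)) atTop (𝓝 1) :=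
    tendsto_natCast_div_add_atTop (1 : ℝ)
  have h3 : Tendsto (fun n : ℕ => ((n : ℝ) / ((n : ℝ) + 2)) ^ a) atTop (𝓝 1) := by
    have := (tendsto_natCast_div_add_atTop (2 : ℝ)).rpow_const (p := a) (Or.inl one_ne_zero)
    simpa using this
  have h4 := (h1.mul h2).mul h3
  rw [mul_one, mul_one] at h4
  refine h4.congr' ?_
  filter_upwards [eventually_ge_atTop 1] with n hn
  have hn0 : (0 : ℝ) < n := by exact_mod_cast hn
  rw [Real.GammaSeq, ← growth_mul_factorial, Nat.factorial_succ, Real.rpow_add_one hn0.ne',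
    Real.div_rpow hn0.le (by positivity)]
  have f1 : ((n.factorial : ℕ) : ℝ) ≠ 0 := by positivity
  have f2 : (n : ℝ) ^ a ≠ 0 := (Real.rpow_pos_of_pos hn0 a).ne'
  have f3 : ((n : ℝ) + 2) ^ a ≠ 0 := (Real.rpow_pos_of_pos (by positivity) a).ne'
  have f4 := (growth_pos ha (n + 2)).ne'
  push_cast
  field_simp

lemma tendsto_nat_of_div {N : ℕ → ℕ} {s : ℝ} (hs : 0 < s)
    (hN : Tendsto (fun n : ℕ => (N n : ℝ) / n) atTop (𝓝 s)) : Tendsto N atTop atTop := by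
  rw [← tendsto_natCast_atTop_iff (R := ℝ)]
  have := hN.pos_mul_atTop hs tendsto_natCast_atTop_atTop
  refine this.congr' ?_
  filter_upwards [eventually_ge_atTop 1] with n hn
  have hn0 : (n : ℝ) ≠ 0 := by positivity
  field_simp

lemma tendsto_growth_ratio {a : ℝ} (ha : -1 < a) {N M : ℕ → ℕ} {s t : ℝ} (hs : 0 < s) (ht : 0 < t)
    (hN : Tendsto (fun n : ℕ => (N n : ℝ) / n) atTop (𝓝 s))
    (hM : Tendsto (fun n : ℕ => (M n : ℝ) / n) atTop (𝓝 t)) :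
    Tendsto (fun n : ℕ => growth a (M n) / growth a (N n)) atTop (𝓝 ((t / s) ^ a)) := by
  have hΓ : (Real.Gamma (a + 1))⁻¹ ≠ 0 := (inv_pos.2 (Real.Gamma_pos_of_pos (by linarith))).ne'
  have hN' := tendsto_nat_of_div hs hN
  have hM' := tendsto_nat_of_div ht hM
  have h1 := ((tendsto_growth_div_rpow ha).comp hM').div ((tendsto_growth_div_rpow ha).comp hN') hΓ
  rw [div_self hΓ] at h1
  have h2 := (hM.div hN hs.ne').rpow_const (p := a) (Or.inl (div_pos ht hs).ne')
  have h3 := h1.mul h2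
  rw [one_mul] at h3
  refine h3.congr' ?_
  filter_upwards [eventually_ge_atTop 1, hN'.eventually_ge_atTop 1, hM'.eventually_ge_atTop 1]
    with n hn hNn hMn
  have e0 : (0 : ℝ) < n := by exact_mod_cast hn
  have e1 : (0 : ℝ) < N n := by exact_mod_cast hNn
  have e2 : (0 : ℝ) < M n := by exact_mod_cast hMn
  have f1 := (Real.rpow_pos_of_pos e1 a).ne'
  have f2 := (Real.rpow_pos_of_pos e2 a).ne'
  have f3 := (growth_pos ha (N n)).ne'
  simp only [Pi.div_apply, Function.comp_apply]
  rw [div_div_div_cancel_right₀ e0.ne', Real.div_rpow e2.le e1.le]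
  field_simp

lemma tendsto_growth_div_sqrt {a : ℝ} (ha : -1 < a) (ha2 : a < 1 / 2) :
    Tendsto (fun n : ℕ => growth a n / Real.sqrt n) atTop (𝓝 0) := by
  have h1 : Tendsto (fun n : ℕ => (n : ℝ) ^ (-(1 / 2 - a))) atTop (𝓝 0) :=
    (tendsto_rpow_neg_atTop (by linarith)).comp tendsto_natCast_atTop_atTop
  have h2 := (tendsto_growth_div_rpow ha).mul h1
  rw [mul_zero] at h2
  refine h2.congr' ?_
  filter_upwards [eventually_ge_atTop 1] with n hn
  have e0 : (0 : ℝ) < n := by exact_mod_cast hn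
  have f1 := (Real.rpow_pos_of_pos e0 a).ne'
  rw [neg_sub, Real.rpow_sub e0, Real.sqrt_eq_rpow]
  field_simp

lemma tendsto_sum_growth {a : ℝ} (ha : -1 < a) (ha2 : a < 1 / 2) :
    Tendsto (fun n : ℕ => ∑ k ∈ Finset.range n, (growth a (k + 1) ^ 2)⁻¹) atTop atTop := by
  rw [← not_summable_iff_tendsto_nat_atTop_of_nonneg
    (fun k => inv_nonneg.2 (sq_nonneg _))]
  intro hsum
  have hsum' : Summable (fun k : ℕ => (growth a k ^ 2)⁻¹) :=
    (summable_nat_add_iff (f := fun k : ℕ => (growth a k ^ 2)⁻¹) 1).1 hsum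
  refine Real.not_summable_one_div_natCast (hsum'.of_norm_bounded_eventually_nat ?_)
  filter_upwards [eventually_ge_atTop 1,
    (tendsto_growth_div_sqrt ha ha2).eventually_lt_const one_pos] with n hn hlt
  have e0 : (0 : ℝ) < n := by exact_mod_cast hn
  have g0 := growth_pos ha n
  rw [div_lt_one (Real.sqrt_pos.2 e0)] at hlt
  rw [Real.norm_of_nonneg (by positivity), one_div]
  refine inv_anti₀ (by positivity) ?_
  calc growth a n ^ 2 ≤ Real.sqrt n ^ 2 := by gcongr
    _ = (n : ℝ) := Real.sq_sqrt e0.le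

/-- The accumulated variance `∑_{k < N} (growth N / growth (k + 1))²`. -/
def accVar (a : ℝ) (N : ℕ) : ℝ :=
  ∑ k ∈ Finset.range N, (growth a N / growth a (k + 1)) ^ 2

lemma accVar_eq (a : ℝ) (N : ℕ) :
    accVar a N = growth a N ^ 2 * ∑ k ∈ Finset.range N, (growth a (k + 1) ^ 2)⁻¹ := by
  rw [accVar, Finset.mul_sum]
  exact Finset.sum_congr rfl fun k _ => by rw [div_pow, div_eq_mul_inv]

/-- The Stolz–Cesàro argument, comparing `N / growth N ^ 2` with `∑ 1 / growth k ^ 2`. -/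
lemma tendsto_accVar_div {a : ℝ} (ha : -1 < a) (ha2 : a < 1 / 2) :
    Tendsto (fun N : ℕ => accVar a N / N) atTop (𝓝 (1 / (1 - 2 * a))) := by
  set g : ℕ → ℝ := fun k => (growth a (k + 1) ^ 2)⁻¹ with hg
  set B : ℕ → ℝ := fun k => k / growth a k ^ 2 with hB
  have hgpos : ∀ k, 0 < g k := fun k => inv_pos.2 (pow_pos (growth_pos ha _) 2)
  have hdiv := tendsto_sum_growth ha ha2
  -- the difference divided by `g k` is exactly `-a² / k` for `k ≥ 1`
  have ho : (fun k => B (k + 1) - B k - (1 - 2 * a) * g k) =o[atTop] g := by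
    have h0 : Tendsto (fun k : ℕ => -(a ^ 2 / (k : ℝ))) atTop (𝓝 0) := by
      simpa using (tendsto_const_div_atTop_nhds_zero_nat (a ^ 2)).neg
    refine Asymptotics.isLittleO_of_tendsto (fun k hk => absurd hk (hgpos k).ne') ?_
    refine h0.congr' ?_
    filter_upwards [eventually_ge_atTop 1] with k hk
    have e0 : (0 : ℝ) < k := by exact_mod_cast hk
    have g1 := (growth_pos ha k).ne'
    have g2 := (one_add_div_pos ha hk).ne'
    have g3 : (k : ℝ) + a ≠ 0 := by
      intro h; apply g2; field_simp; simpa using h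
    simp only [hB, hg, growth_succ a hk]
    push_cast
    field_simp
    ring
  have h1 := ho.sum_range (fun k => (hgpos k).le) hdiv
  have h2 := h1.tendsto_div_nhds_zero
  have h3 : Tendsto (fun N => B N / ∑ k ∈ Finset.range N, g k) atTop (𝓝 (1 - 2 * a)) := by
    have := h2.add_const (1 - 2 * a)
    rw [zero_add] at this
    refine this.congr' ?_
    filter_upwards [hdiv.eventually_gt_atTop 0] with N hN
    rw [Finset.sum_sub_distrib, Finset.sum_range_sub, ← Finset.mul_sum]
    have : B 0 = 0 := by simp [hB]
    rw [this]
    have hN' : ∑ k ∈ Finset.range N, g k ≠ 0 := hN.ne'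
    field_simp
    ring
  have h4 := h3.inv₀ (by linarith)
  rw [← one_div] at h4
  refine h4.congr' ?_
  filter_upwards [hdiv.eventually_gt_atTop 0, eventually_ge_atTop 1] with N hN hN1
  rw [accVar_eq]
  have e0 : (0 : ℝ) < N := by exact_mod_cast hN1
  have g1 := (growth_pos ha N).ne'
  have hN' : ∑ k ∈ Finset.range N, g k ≠ 0 := hN.ne'
  change ((N : ℝ) / growth a N ^ 2 / ∑ k ∈ Finset.range N, g k)⁻¹
    = growth a N ^ 2 * (∑ k ∈ Finset.range N, g k) / N
  generalize ∑ k ∈ Finset.range N, g k = G at hN' ⊢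
  field_simp

/-- Weighted averages, with the weights of `accVar`, of a sequence tending to `0` tend to `0`. -/
lemma tendsto_weighted_div {a : ℝ} (ha : -1 < a) (ha2 : a < 1 / 2) {r : ℕ → ℝ}
    (hr : Tendsto r atTop (𝓝 0)) :
    Tendsto (fun N : ℕ => (∑ k ∈ Finset.range N,
      (growth a N / growth a (k + 1)) ^ 2 * r k) / N) atTop (𝓝 0) := by
  set g : ℕ → ℝ := fun k => (growth a (k + 1) ^ 2)⁻¹ with hg
  have hgpos : ∀ k, 0 < g k := fun k => inv_pos.2 (pow_pos (growth_pos ha _) 2)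
  have hdiv := tendsto_sum_growth ha ha2
  have ho : (fun k => g k * r k) =o[atTop] g := by
    refine Asymptotics.isLittleO_of_tendsto (fun k hk => absurd hk (hgpos k).ne') ?_
    refine hr.congr fun k => ?_
    have := (hgpos k).ne'
    field_simp
  have h2 := (ho.sum_range (fun k => (hgpos k).le) hdiv).tendsto_div_nhds_zero
  have h3 := h2.mul (tendsto_accVar_div ha ha2)
  rw [zero_mul] at h3
  refine h3.congr' ?_
  filter_upwards [hdiv.eventually_gt_atTop 0] with N hN
  have hN' : ∑ k ∈ Finset.range N, g k ≠ 0 := hN.ne'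
  rw [accVar_eq]
  have : ∑ k ∈ Finset.range N, (growth a N / growth a (k + 1)) ^ 2 * r k
      = growth a N ^ 2 * ∑ k ∈ Finset.range N, g k * r k := by
    rw [Finset.mul_sum]
    refine Finset.sum_congr rfl fun k _ => ?_
    simp only [hg]; rw [div_pow]; ring
  rw [this]
  change _ / (∑ k ∈ Finset.range N, g k) * (growth a N ^ 2 * (∑ k ∈ Finset.range N, g k) / N) = _
  field_simp

/-- A bound on the amplification factors that is uniform in `k` and valid for both signs of `a`. -/
lemma growth_div_le {a : ℝ} (ha : -1 < a) {k N : ℕ} (hk : 1 ≤ k) (hkN : k ≤ N) :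
    growth a N / growth a k ≤ 1 + growth a N := by
  have hN := growth_pos ha N
  have hkp := growth_pos ha k
  rcases le_total 0 a with h | h
  · have : 1 ≤ growth a k := by
      refine Finset.prod_induction _ (fun x : ℝ => 1 ≤ x) 
        (fun x y hx hy => one_le_mul_of_one_le_of_one_le hx hy) le_rfl fun i _ => ?_
      have : 0 ≤ a / (i : ℝ) := by positivity
      linarith
    rw [div_le_iff₀ hkp]
    nlinarith
  · have : growth a N ≤ growth a k := by
      clear hN
      induction N, hkN using Nat.le_induction with
      | base => exact le_rfl
      | succ N hN ih =>
        rw [growth_succ a (hk.trans hN)]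
        refine le_trans ?_ ih
        have : a / (N : ℝ) ≤ 0 := div_nonpos_of_nonpos_of_nonneg h (by positivity)
        exact mul_le_of_le_one_right (growth_pos ha N).le (by linarith)
    have : growth a N / growth a k ≤ 1 := (div_le_one hkp).2 this
    linarith

/-- The one-step errors, for test functions of size `C / √n`, add up to something negligible. -/
lemma tendsto_sum_stepErr {a : ℝ} (ha : -1 < a) (ha2 : a < 1 / 2) {r : ℕ → ℝ}
    (hr0 : ∀ k, 0 ≤ r k) (hr : Tendsto r atTop (𝓝 0)) {C : ℝ} (hC : 0 ≤ C) {N : ℕ → ℕ} {t : ℝ}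
    (ht : 0 < t) (hN : Tendsto (fun n : ℕ => (N n : ℝ) / n) atTop (𝓝 t)) {k₀ : ℕ → ℕ} :
    Tendsto (fun n : ℕ => ∑ k ∈ Finset.Ico (k₀ n) (N n),
      stepErr (r k) (growth a (N n) / growth a (k + 1) * (C / Real.sqrt n))) atTop (𝓝 0) := by
  have hN' := tendsto_nat_of_div ht hN
  have hR : Tendsto (fun n : ℕ => (1 + growth a (N n)) / Real.sqrt n) atTop (𝓝 0) := by
    have h1 := ((tendsto_growth_div_sqrt ha ha2).comp hN').mul (hN.sqrt)
    have h2 : Tendsto (fun n : ℕ => 1 / Real.sqrt n) atTop (𝓝 0) :=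
      (tendsto_const_nhds (x := (1 : ℝ))).div_atTop
        (Real.tendsto_sqrt_atTop.comp tendsto_natCast_atTop_atTop)
    have h3 := h2.add h1
    rw [zero_mul, add_zero] at h3
    refine h3.congr' ?_
    filter_upwards [hN'.eventually_ge_atTop 1] with n hn
    have e1 : (0 : ℝ) < N n := by exact_mod_cast hn
    have e2 := (Real.sqrt_pos.2 e1).ne'
    simp only [Function.comp_apply]
    rw [Real.sqrt_div e1.le]
    field_simp
  have hV := ((tendsto_accVar_div ha ha2).comp hN').mul hN
  have hW := ((tendsto_weighted_div ha ha2 hr).comp hN').mul hN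
  have hlim : Tendsto (fun n : ℕ =>
      2 * C ^ 2 * (((∑ k ∈ Finset.range (N n),
        (growth a (N n) / growth a (k + 1)) ^ 2 * r k) / (N n : ℝ)) * ((N n : ℝ) / n))
      + C ^ 2 * ((accVar a (N n) / (N n : ℝ)) * ((N n : ℝ) / n)) *
        (32 * (C * ((1 + growth a (N n)) / Real.sqrt n))
          + (C * ((1 + growth a (N n)) / Real.sqrt n)) ^ 2)) atTop (𝓝 0) := by
    have hR1 := hR.const_mul C
    have := (hW.const_mul (2 * C ^ 2)).add
      ((hV.const_mul (C ^ 2)).mul ((hR1.const_mul 32).add (hR1.pow 2)))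
    simpa using this
  refine squeeze_zero' (.of_forall fun n => Finset.sum_nonneg fun k _ => ?_) ?_ hlim
  · have := hr0 k
    have := growth_pos ha (N n)
    have := growth_pos ha (k + 1)
    unfold stepErr
    positivity
  filter_upwards [hN'.eventually_ge_atTop 1, eventually_ge_atTop 1] with n hn hn1
  have e1 : (0 : ℝ) < N n := by exact_mod_cast hn
  have e0 : (0 : ℝ) < n := by exact_mod_cast hn1
  have es := Real.sqrt_pos.2 e0
  set R := C * ((1 + growth a (N n)) / Real.sqrt n) with hRdef
  have hterm : ∀ k ∈ Finset.range (N n),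
      stepErr (r k) (growth a (N n) / growth a (k + 1) * (C / Real.sqrt n))
      ≤ 2 * C ^ 2 / n * ((growth a (N n) / growth a (k + 1)) ^ 2 * r k)
        + C ^ 2 / n * (32 * R + R ^ 2) * (growth a (N n) / growth a (k + 1)) ^ 2 := by
    intro k hk
    have hD := growth_div_le ha (Nat.le_add_left 1 k)
      (Nat.succ_le_of_lt (Finset.mem_range.1 hk))
    have hg1 := growth_pos ha (N n)
    have hg2 := growth_pos ha (k + 1)
    set D := growth a (N n) / growth a (k + 1) with hDdef
    have hD0 : 0 ≤ D := by positivity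
    have hx : D * (C / Real.sqrt n) ≤ R := by
      rw [hRdef]
      calc D * (C / Real.sqrt n) ≤ (1 + growth a (N n)) * (C / Real.sqrt n) := by gcongr
        _ = _ := by ring
    have hx0 : 0 ≤ D * (C / Real.sqrt n) := by positivity
    have hsq : (D * (C / Real.sqrt n)) ^ 2 = C ^ 2 / n * D ^ 2 := by
      rw [mul_pow, div_pow C, Real.sq_sqrt e0.le]; ring
    set x := D * (C / Real.sqrt n) with hxdef
    have : stepErr (r k) x = x ^ 2 * (2 * r k + (32 * x + x ^ 2)) := by unfold stepErr; ring
    rw [this]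
    calc x ^ 2 * (2 * r k + (32 * x + x ^ 2)) ≤ x ^ 2 * (2 * r k + (32 * R + R ^ 2)) := by gcongr
      _ = _ := by rw [hsq]; ring
  calc _ ≤ ∑ k ∈ Finset.range (N n),
        stepErr (r k) (growth a (N n) / growth a (k + 1) * (C / Real.sqrt n)) := by
        refine Finset.sum_le_sum_of_subset_of_nonneg (fun k hk => ?_) fun k _ _ => ?_
        · exact Finset.mem_range.2 (Finset.mem_Ico.1 hk).2
        · have := hr0 k
          have := growth_pos ha (N n)
          have := growth_pos ha (k + 1)
          unfold stepErr
          positivity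
    _ ≤ _ := Finset.sum_le_sum hterm
    _ = _ := by
        rw [Finset.sum_add_distrib, ← Finset.mul_sum, ← Finset.mul_sum, ← accVar]
        field_simp


/-! ### Two-time characteristic function of one chain -/

lemma meanDev_nonneg (k : ℕ) : 0 ≤ meanDev μ p ξ k :=
  integral_nonneg fun _ => Finset.sum_nonneg fun _ _ => abs_nonneg _

lemma sum_Ico_growth {a : ℝ} (ha : -1 < a) {k₀ N : ℕ} (h : k₀ ≤ N) :
    ∑ k ∈ Finset.Ico k₀ N, (growth a N / growth a (k + 1)) ^ 2
      = accVar a N - (growth a N / growth a k₀) ^ 2 * accVar a k₀ := by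
  rw [Finset.sum_Ico_eq_sub _ h, accVar, accVar, Finset.mul_sum]
  congr 1
  refine Finset.sum_congr rfl fun k _ => ?_
  have := (growth_pos ha k₀).ne'
  rw [← mul_pow]
  congr 1
  field_simp

/-- Asymptotic form of `norm_integral_iterate_le` for test functions of order `1 / √n`. -/
lemma tendsto_integral_iterate [IsProbabilityMeasure μ] (H : IsERW μ m p ξ)
    {a : ℝ} (ha : a = ((m : ℝ) * p - 1) / ((m : ℝ) - 1)) (ha1 : -1 < a) (ha2 : a < 1 / 2)
    {k₀ N : ℕ → ℕ} (hk₀ : ∀ᶠ n in atTop, 1 ≤ k₀ n) (hk₀N : ∀ᶠ n in atTop, k₀ n ≤ N n)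
    {Φ : ℕ → Ω → ℂ} (hΦ : ∀ n, Measurable[stepFiltration ξ (k₀ n)] (Φ n))
    (hΦ1 : ∀ n ω, ‖Φ n ω‖ ≤ 1)
    {t : ℝ} (ht : 0 < t) (hN : Tendsto (fun n : ℕ => (N n : ℝ) / n) atTop (𝓝 t))
    {h : ℕ → Fin m → ℝ} (hh : ∀ n, ∑ j, h n j = 0) {C : ℝ} (hC : 0 ≤ C)
    (hhC : ∀ᶠ n : ℕ in atTop, ∀ j, |h n j| ≤ C / Real.sqrt n) :
    Tendsto (fun n => ∫ ω, Φ n ω * Complex.exp (Complex.I * (stepSum ξ (h n) (N n) ω : ℂ)) ∂μ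
      - (∫ ω, Φ n ω * Complex.exp (Complex.I *
          (stepSum ξ (fun j => growth a (N n) / growth a (k₀ n) * h n j) (k₀ n) ω : ℂ)) ∂μ)
        * Complex.exp (-((unifVar (h n) * (accVar a (N n)
            - (growth a (N n) / growth a (k₀ n)) ^ 2 * accVar a (k₀ n)) : ℝ) : ℂ) / 2))
      atTop (𝓝 0) := by
  refine squeeze_zero_norm' ?_ (tendsto_sum_stepErr ha1 ha2 (r := meanDev μ p ξ) meanDev_nonneg
    (tendsto_meanDev H ha ha2) hC ht hN (k₀ := k₀))
  filter_upwards [hk₀, hk₀N, hhC] with n h1 h2 h3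
  rw [← sum_Ico_growth ha1 h2]
  exact norm_integral_iterate_le H ha ha1 h1 (hΦ n) (hΦ1 n) h2 (hh n) h3

/-- Covariance of two centred functions under the uniform law. -/
def unifCov (f g : Fin m → ℝ) : ℝ := (m : ℝ)⁻¹ * ∑ j, f j * g j

lemma unifVar_add_mul (f g : Fin m → ℝ) (c : ℝ) :
    unifVar (fun j => f j + c * g j) = unifVar f + 2 * c * unifCov f g + c ^ 2 * unifVar g := by
  simp only [unifVar, unifCov, Finset.mul_sum, ← Finset.sum_add_distrib]
  exact Finset.sum_congr rfl fun j _ => by ring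

lemma stepSum_add (f g : Fin m → ℝ) (k : ℕ) (ω : Ω) :
    stepSum ξ (fun j => f j + g j) k ω = stepSum ξ f k ω + stepSum ξ g k ω := by
  simp [stepSum, Finset.sum_add_distrib]

lemma tendsto_cexp_neg_half {x : ℕ → ℝ} {y : ℝ} (h : Tendsto x atTop (𝓝 y)) :
    Tendsto (fun n => Complex.exp (-(x n : ℂ) / 2)) atTop (𝓝 (Complex.exp (-(y : ℂ) / 2))) :=
  ((show Continuous (fun z : ℝ => Complex.exp (-(z : ℂ) / 2)) by fun_prop).tendsto y).comp h

/-- A single step is bounded, hence negligible after normalisation. -/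
lemma tendsto_integral_first_step [IsProbabilityMeasure μ] (H : IsERW μ m p ξ)
    {h : ℕ → Fin m → ℝ} {e : ℕ → ℝ} (he : Tendsto e atTop (𝓝 0))
    (hhe : ∀ᶠ n in atTop, ∀ j, |h n j| ≤ e n) :
    Tendsto (fun n => ∫ ω, (1 : ℂ) * Complex.exp (Complex.I * (stepSum ξ (h n) 1 ω : ℂ)) ∂μ)
      atTop (𝓝 1) := by
  have h1 : Tendsto (fun n => ∫ ω, Complex.exp (Complex.I * (stepSum ξ (h n) 1 ω : ℂ)) ∂μ)
      atTop (𝓝 (∫ _, (1 : ℂ) ∂μ)) := by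
    refine tendsto_integral_filter_of_dominated_convergence (fun _ => (1 : ℝ))
      (.of_forall fun n => ?_) (.of_forall fun n => .of_forall fun ω => ?_)
      (integrable_const _) (.of_forall fun ω => ?_)
    · exact ((measurable_cexp_stepSum (le_refl 1) (h n)).mono
        (stepFiltration_le H.meas 1) le_rfl).aestronglyMeasurable
    · exact (norm_cexp_I_mul _).le
    · have h2 : Tendsto (fun n => stepSum ξ (h n) 1 ω) atTop (𝓝 0) := by
        refine squeeze_zero_norm' ?_ he
        filter_upwards [hhe] with n hn
        simpa [stepSum] using hn (ξ 1 ω)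
      have h4 := ((show Continuous (fun x : ℝ => Complex.exp (Complex.I * (x : ℂ))) by
        fun_prop).tendsto 0).comp h2
      simpa [Function.comp_def] using h4
  simpa using h1

/-- Joint limit law, for one chain, of two zero-sum functionals taken at two times.
One application of `tendsto_integral_iterate` brings the second time down to the first, a
second application brings the first time down to time `1`. -/
theorem tendsto_chain [IsProbabilityMeasure μ] (H : IsERW μ m p ξ)
    {a : ℝ} (ha : a = ((m : ℝ) * p - 1) / ((m : ℝ) - 1)) (ha1 : -1 < a) (ha2 : a < 1 / 2)
    {N₁ N₂ : ℕ → ℕ} (hle : ∀ n, N₁ n ≤ N₂ n) {s t : ℝ} (hs : 0 < s) (ht : 0 < t)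
    (hN₁ : Tendsto (fun n : ℕ => (N₁ n : ℝ) / n) atTop (𝓝 s))
    (hN₂ : Tendsto (fun n : ℕ => (N₂ n : ℝ) / n) atTop (𝓝 t))
    {f₁ f₂ : Fin m → ℝ} (hf₁ : ∑ j, f₁ j = 0) (hf₂ : ∑ j, f₂ j = 0) :
    Tendsto (fun n : ℕ => ∫ ω, Complex.exp (Complex.I *
        (((Real.sqrt n)⁻¹ * (stepSum ξ f₁ (N₁ n) ω + stepSum ξ f₂ (N₂ n) ω) : ℝ) : ℂ)) ∂μ)
      atTop (𝓝 (Complex.exp (-((1 / (1 - 2 * a) * (s * unifVar f₁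
        + 2 * (s * (t / s) ^ a) * unifCov f₁ f₂ + t * unifVar f₂) : ℝ) : ℂ) / 2))) := by
  set c : ℕ → ℝ := fun n => (Real.sqrt n)⁻¹ with hc
  have hc0 : ∀ n, 0 ≤ c n := fun n => by positivity
  have hc2 : ∀ n, c n ^ 2 = (n : ℝ)⁻¹ := fun n => by
    simp only [hc, inv_pow, Real.sq_sqrt (Nat.cast_nonneg n)]
  have hN₁' := tendsto_nat_of_div hs hN₁
  have hN₂' := tendsto_nat_of_div ht hN₂
  set ρ : ℕ → ℝ := fun n => growth a (N₂ n) / growth a (N₁ n) with hρ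
  have hρlim : Tendsto ρ atTop (𝓝 ((t / s) ^ a)) := tendsto_growth_ratio ha1 hs ht hN₁ hN₂
  have hρ0 : ∀ n, 0 ≤ ρ n := fun n => (div_pos (growth_pos ha1 _) (growth_pos ha1 _)).le
  have hacc₁ : Tendsto (fun n => accVar a (N₁ n) / (n : ℝ)) atTop (𝓝 (1 / (1 - 2 * a) * s)) := by
    refine (((tendsto_accVar_div ha1 ha2).comp hN₁').mul hN₁).congr' ?_
    filter_upwards [hN₁'.eventually_ge_atTop 1] with n hn
    have : (N₁ n : ℝ) ≠ 0 := by positivity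
    simp only [Function.comp_apply]
    field_simp
  have hacc₂ : Tendsto (fun n => accVar a (N₂ n) / (n : ℝ)) atTop (𝓝 (1 / (1 - 2 * a) * t)) := by
    refine (((tendsto_accVar_div ha1 ha2).comp hN₂').mul hN₂).congr' ?_
    filter_upwards [hN₂'.eventually_ge_atTop 1] with n hn
    have : (N₂ n : ℝ) ≠ 0 := by positivity
    simp only [Function.comp_apply]
    field_simp
  obtain ⟨C₁, hC₁⟩ : ∃ C₁, ∀ j, |f₁ j| ≤ C₁ :=
    ⟨∑ j, |f₁ j|, fun j => Finset.single_le_sum (f := fun j => |f₁ j|)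
      (fun _ _ => abs_nonneg _) (Finset.mem_univ j)⟩
  obtain ⟨C₂, hC₂⟩ : ∃ C₂, ∀ j, |f₂ j| ≤ C₂ :=
    ⟨∑ j, |f₂ j|, fun j => Finset.single_le_sum (f := fun j => |f₂ j|)
      (fun _ _ => abs_nonneg _) (Finset.mem_univ j)⟩
  have hm0 : 0 < m := by have := H.two_le; omega
  have hC₁0 : 0 ≤ C₁ := (abs_nonneg _).trans (hC₁ ⟨0, hm0⟩)
  have hC₂0 : 0 ≤ C₂ := (abs_nonneg _).trans (hC₂ ⟨0, hm0⟩)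
  -- from the second time to the first
  have hX := tendsto_integral_iterate H ha ha1 ha2 (hN₁'.eventually_ge_atTop 1)
    (.of_forall hle)
    (Φ := fun n ω => Complex.exp (Complex.I * (stepSum ξ (fun j => c n * f₁ j) (N₁ n) ω : ℂ)))
    (fun n => measurable_cexp_stepSum le_rfl _) (fun n ω => (norm_cexp_I_mul _).le) ht hN₂
    (h := fun n j => c n * f₂ j) (fun n => by rw [← Finset.mul_sum, hf₂, mul_zero]) hC₂0
    (.of_forall fun n j => by
      rw [abs_mul, abs_of_nonneg (hc0 n), mul_comm, div_eq_mul_inv]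
      exact mul_le_mul_of_nonneg_right (hC₂ j) (hc0 n))
  -- from the first time to time `1`
  set g : ℕ → Fin m → ℝ := fun n j => c n * (f₁ j + ρ n * f₂ j) with hg
  set C := C₁ + ((t / s) ^ a + 1) * C₂ with hC
  have hts : 0 < (t / s) ^ a := Real.rpow_pos_of_pos (div_pos ht hs) a
  have hC0 : 0 ≤ C := by positivity
  have hgC : ∀ᶠ n : ℕ in atTop, ∀ j, |g n j| ≤ C / Real.sqrt n := by
    filter_upwards [hρlim.eventually_lt_const (lt_add_one _)] with n hn j
    rw [hg, abs_mul, abs_of_nonneg (hc0 n), mul_comm, div_eq_mul_inv]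
    refine mul_le_mul_of_nonneg_right ((abs_add_le _ _).trans (add_le_add (hC₁ j) ?_)) (hc0 n)
    rw [abs_mul, abs_of_nonneg (hρ0 n)]
    exact mul_le_mul hn.le (hC₂ j) (abs_nonneg _) (by positivity)
  have hY := tendsto_integral_iterate H ha ha1 ha2 (k₀ := fun _ => 1) (.of_forall fun _ => le_rfl)
    (hN₁'.eventually_ge_atTop 1) (Φ := fun _ _ => 1) (fun n => measurable_const)
    (fun n ω => by simp) hs hN₁ (h := g)
    (fun n => by
      simp only [hg]
      rw [← Finset.mul_sum, Finset.sum_add_distrib, ← Finset.mul_sum, hf₁, hf₂]; simp) hC0 hgC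
  have hgrow : Tendsto (fun n : ℕ => growth a (N₁ n) / Real.sqrt n) atTop (𝓝 0) := by
    have h1 := ((tendsto_growth_div_sqrt ha1 ha2).comp hN₁').mul hN₁.sqrt
    rw [zero_mul] at h1
    refine h1.congr' ?_
    filter_upwards [hN₁'.eventually_ge_atTop 1] with n hn
    have e1 : (0 : ℝ) < N₁ n := by exact_mod_cast hn
    have e2 := (Real.sqrt_pos.2 e1).ne'
    simp only [Function.comp_apply]
    rw [Real.sqrt_div e1.le]
    field_simp
  have hgr1 : growth a 1 = 1 := by simp [growth]
  have hacc1 : accVar a 1 = 1 := by simp [accVar, hgr1]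
  have hZ : Tendsto (fun n => ∫ ω, (1 : ℂ) * Complex.exp (Complex.I *
      (stepSum ξ (fun j => growth a (N₁ n) / growth a 1 * g n j) 1 ω : ℂ)) ∂μ) atTop (𝓝 1) := by
    have h3 := hgrow.mul_const C
    rw [zero_mul] at h3
    refine tendsto_integral_first_step H h3 ?_
    filter_upwards [hgC] with n hn j
    have := growth_pos ha1 (N₁ n)
    rw [hgr1, div_one, abs_mul, abs_of_pos this]
    calc growth a (N₁ n) * |g n j| ≤ growth a (N₁ n) * (C / Real.sqrt n) := by
          gcongr; exact hn _
      _ = _ := by ring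
  have hF : Tendsto (fun n => unifVar (g n) * (accVar a (N₁ n)
      - (growth a (N₁ n) / growth a 1) ^ 2 * accVar a 1)) atTop
      (𝓝 ((unifVar f₁ + 2 * (t / s) ^ a * unifCov f₁ f₂ + ((t / s) ^ a) ^ 2 * unifVar f₂)
        * (1 / (1 - 2 * a) * s - 0 ^ 2))) := by
    have h1 := ((tendsto_const_nhds (x := unifVar f₁)).add
      ((hρlim.const_mul 2).mul_const (unifCov f₁ f₂))).add ((hρlim.pow 2).mul_const (unifVar f₂))
    refine (h1.mul (hacc₁.sub (hgrow.pow 2))).congr fun n => ?_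
    rw [hg, unifVar_const_mul, unifVar_add_mul, hc2, hgr1, hacc1, div_pow (growth a (N₁ n)) (√_),
      Real.sq_sqrt (Nat.cast_nonneg n)]
    ring
  have hE : Tendsto (fun n => unifVar (fun j => c n * f₂ j) * (accVar a (N₂ n)
      - (growth a (N₂ n) / growth a (N₁ n)) ^ 2 * accVar a (N₁ n))) atTop
      (𝓝 (unifVar f₂ * (1 / (1 - 2 * a) * t - ((t / s) ^ a) ^ 2 * (1 / (1 - 2 * a) * s)))) := by
    refine ((hacc₂.sub ((hρlim.pow 2).mul hacc₁)).const_mul (unifVar f₂)).congr fun n => ?_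
    rw [unifVar_const_mul, hc2]
    ring
  have hYlim := hY.add (hZ.mul (tendsto_cexp_neg_half hF))
  simp only [sub_add_cancel, zero_add, one_mul] at hYlim
  have hYeq : ∀ n, ∫ ω, Complex.exp (Complex.I * (stepSum ξ (fun j => c n * f₁ j) (N₁ n) ω : ℂ)) *
      Complex.exp (Complex.I * (stepSum ξ (fun j => growth a (N₂ n) / growth a (N₁ n) *
        (c n * f₂ j)) (N₁ n) ω : ℂ)) ∂μ
      = ∫ ω, Complex.exp (Complex.I * (stepSum ξ (g n) (N₁ n) ω : ℂ)) ∂μ := by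
    intro n
    refine integral_congr_ae (.of_forall fun ω => ?_)
    have : g n = fun j => c n * f₁ j + growth a (N₂ n) / growth a (N₁ n) * (c n * f₂ j) := by
      funext j; simp only [hg, hρ]; ring
    simp only [this, stepSum_add]
    rw [← Complex.exp_add]
    congr 1; push_cast; ring
  simp only [hYeq] at hX
  have hXlim := hX.add (hYlim.mul (tendsto_cexp_neg_half hE))
  simp only [sub_add_cancel, zero_add] at hXlim
  rw [← Complex.exp_add] at hXlim
  convert hXlim using 2
  · refine integral_congr_ae (.of_forall fun ω => ?_)
    simp only [stepSum_const_mul, hc]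
    rw [← Complex.exp_add]
    congr 1; push_cast; ring
  · congr 1; push_cast; ring


/-! ### From characteristic functions to weak convergence -/

lemma blockForm_eq {d : ℕ} (A B D : Matrix (Fin d) (Fin d) ℝ) (x : Fin d ⊕ Fin d → ℝ) :
    x ⬝ᵥ (Matrix.fromBlocks A B Bᵀ D) *ᵥ x
      = (x ∘ Sum.inl) ⬝ᵥ A *ᵥ (x ∘ Sum.inl) + 2 * ((x ∘ Sum.inl) ⬝ᵥ B *ᵥ (x ∘ Sum.inr))
        + (x ∘ Sum.inr) ⬝ᵥ D *ᵥ (x ∘ Sum.inr) := by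
  have hx : x = Sum.elim (x ∘ Sum.inl) (x ∘ Sum.inr) := (Sum.elim_comp_inl_inr x).symm
  rw [Matrix.fromBlocks_mulVec]
  conv_lhs => rw [hx]
  rw [sumElim_dotProduct_sumElim]
  simp only [Sum.elim_comp_inl, Sum.elim_comp_inr, dotProduct_add]
  have : (x ∘ Sum.inr) ⬝ᵥ Bᵀ *ᵥ (x ∘ Sum.inl) = (x ∘ Sum.inl) ⬝ᵥ B *ᵥ (x ∘ Sum.inr) := by
    rw [Matrix.mulVec_transpose, dotProduct_comm, Matrix.dotProduct_mulVec]
  rw [this]; ring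

/-- Lévy's continuity theorem for pairs: convergence of the joint characteristic functions to
`exp (-Q / 2)` forces `Q` to be nonnegative and yields weak convergence to the centred Gaussian
law with covariance form `Q`. -/
theorem exists_gaussian_limit {Ω : Type*} [MeasurableSpace Ω] {μ : Measure Ω}
    [IsProbabilityMeasure μ] {d : ℕ} {A B D : Matrix (Fin d) (Fin d) ℝ} (hA : Aᵀ = A) (hD : Dᵀ = D)
    {X : ℕ → Ω → (Fin d → ℝ) × (Fin d → ℝ)} (hX : ∀ n, Measurable (X n))
    (hlim : ∀ l₁ l₂ : Fin d → ℝ, Tendsto (fun n => ∫ ω, Complex.exp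
        (Complex.I * ((l₁ ⬝ᵥ (X n ω).1 + l₂ ⬝ᵥ (X n ω).2 : ℝ) : ℂ)) ∂μ) atTop
      (𝓝 (Complex.exp (-((l₁ ⬝ᵥ A *ᵥ l₁ + 2 * (l₁ ⬝ᵥ B *ᵥ l₂) + l₂ ⬝ᵥ D *ᵥ l₂ : ℝ) : ℂ) / 2)))) :
    ∃ ν : Measure ((Fin d → ℝ) × (Fin d → ℝ)), IsProbabilityMeasure ν ∧
      (∀ l₁ l₂ : Fin d → ℝ,
        ν.map (fun q => l₁ ⬝ᵥ q.1 + l₂ ⬝ᵥ q.2) =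
          ProbabilityTheory.gaussianReal 0 (Real.toNNReal
            (l₁ ⬝ᵥ A.mulVec l₁ + 2 * (l₁ ⬝ᵥ B.mulVec l₂) + l₂ ⬝ᵥ D.mulVec l₂))) ∧
      ∀ f : BoundedContinuousFunction ((Fin d → ℝ) × (Fin d → ℝ)) ℝ,
        Tendsto (fun n : ℕ => ∫ ω, f (X n ω) ∂μ) atTop (𝓝 (∫ x, f x ∂ν)) := by
  set Q : (Fin d → ℝ) → (Fin d → ℝ) → ℝ := fun l₁ l₂ =>
    l₁ ⬝ᵥ A *ᵥ l₁ + 2 * (l₁ ⬝ᵥ B *ᵥ l₂) + l₂ ⬝ᵥ D *ᵥ l₂ with hQ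
  -- a limit of characteristic functions has modulus at most `1`
  have hQ0 : ∀ l₁ l₂, 0 ≤ Q l₁ l₂ := by
    intro l₁ l₂
    have h1 := (hlim l₁ l₂).norm
    have h2 : ‖Complex.exp (-((Q l₁ l₂ : ℝ) : ℂ) / 2)‖ ≤ 1 := by
      refine le_of_tendsto h1 (.of_forall fun n => ?_)
      refine (norm_integral_le_of_norm_le_const (C := 1)
        (.of_forall fun ω => (norm_cexp_I_mul _).le)).trans ?_
      simp
    have e : (-((Q l₁ l₂ : ℝ) : ℂ) / 2) = ((-(Q l₁ l₂) / 2 : ℝ) : ℂ) := by push_cast; rfl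
    rw [e, Complex.norm_exp_ofReal, Real.exp_le_one_iff] at h2
    linarith
  set M := Matrix.fromBlocks A B Bᵀ D with hM
  have hMQ : ∀ x : Fin d ⊕ Fin d → ℝ, x ⬝ᵥ M *ᵥ x = Q (x ∘ Sum.inl) (x ∘ Sum.inr) :=
    fun x => blockForm_eq A B D x
  have hpos : M.PosSemidef := by
    refine Matrix.PosSemidef.of_dotProduct_mulVec_nonneg ?_ fun x => ?_
    · rw [Matrix.IsHermitian, Matrix.conjTranspose_eq_transpose_of_trivial, hM,
        Matrix.fromBlocks_transpose, hA, hD, Matrix.transpose_transpose]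
    · rw [star_trivial, hMQ]; exact hQ0 _ _
  let toPair : EuclideanSpace ℝ (Fin d ⊕ Fin d) → (Fin d → ℝ) × (Fin d → ℝ) := fun x =>
     (fun i => x (Sum.inl i), fun i => x (Sum.inr i))
  let ofPair : (Fin d → ℝ) × (Fin d → ℝ) → EuclideanSpace ℝ (Fin d ⊕ Fin d) := fun q =>
    WithLp.toLp 2 (Sum.elim q.1 q.2)
  have hto : Continuous toPair := by
    refine Continuous.prodMk ?_ ?_ <;> fun_prop
  have hof : Continuous ofPair := by
    refine (PiLp.continuous_toLp 2 _).comp (continuous_pi fun i => ?_)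
    rcases i with i | i
    · exact (continuous_apply i).comp continuous_fst
    · exact (continuous_apply i).comp continuous_snd
  have htoof : ∀ q, toPair (ofPair q) = q := fun q => rfl
  have hinner : ∀ x y : EuclideanSpace ℝ (Fin d ⊕ Fin d), inner ℝ x y
      = (toPair y).1 ⬝ᵥ (toPair x).1 + (toPair y).2 ⬝ᵥ (toPair x).2 := by
    intro x y
    simp only [PiLp.inner_apply, Fintype.sum_sum_type, dotProduct, toPair]
    rfl
  let γ := multivariateGaussian (0 : EuclideanSpace ℝ (Fin d ⊕ Fin d)) M
  have hγ : ∀ y : EuclideanSpace ℝ (Fin d ⊕ Fin d), charFun γ y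
      = Complex.exp (-((Q (toPair y).1 (toPair y).2 : ℝ) : ℂ) / 2) := by
    intro y
    rw [charFun_multivariateGaussian hpos, hMQ]
    simp only [inner_zero_right]
    congr 1
    push_cast
    simp only [zero_mul, zero_sub, neg_div]
    rfl
  have hmeas : ∀ n, AEMeasurable (fun ω => ofPair (X n ω)) μ := fun n =>
    (hof.measurable.comp (hX n)).aemeasurable
  let P : ℕ → ProbabilityMeasure (EuclideanSpace ℝ (Fin d ⊕ Fin d)) := fun n =>
    ⟨μ.map (fun ω => ofPair (X n ω)), Measure.isProbabilityMeasure_map (hmeas n)⟩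
  let G : ProbabilityMeasure (EuclideanSpace ℝ (Fin d ⊕ Fin d)) := ⟨γ, inferInstance⟩
  have hPG : Tendsto P atTop (𝓝 G) := by
    refine ProbabilityMeasure.tendsto_iff_tendsto_charFun.2 fun y => ?_
    change Tendsto (fun n => charFun (μ.map (fun ω => ofPair (X n ω))) y) atTop (𝓝 (charFun γ y))
    rw [hγ]
    refine (hlim (toPair y).1 (toPair y).2).congr fun n => ?_
    rw [charFun_apply, integral_map (hmeas n) (by fun_prop)]
    refine integral_congr_ae (.of_forall fun ω => ?_)
    simp only [hinner, htoof]
    rw [mul_comm]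
  rw [ProbabilityMeasure.tendsto_iff_forall_integral_tendsto] at hPG
  refine ⟨γ.map toPair, Measure.isProbabilityMeasure_map hto.measurable.aemeasurable,
    fun l₁ l₂ => ?_, fun f => ?_⟩
  · have hl : Continuous (fun q : (Fin d → ℝ) × (Fin d → ℝ) => l₁ ⬝ᵥ q.1 + l₂ ⬝ᵥ q.2) := by
      fun_prop
    rw [Measure.map_map hl.measurable hto.measurable]
    have : IsProbabilityMeasure (γ.map ((fun q : (Fin d → ℝ) × (Fin d → ℝ) =>
      l₁ ⬝ᵥ q.1 + l₂ ⬝ᵥ q.2) ∘ toPair)) :=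
      Measure.isProbabilityMeasure_map (hl.comp hto).measurable.aemeasurable
    refine Measure.ext_of_charFun (funext fun c => ?_)
    have h1 := hγ (ofPair (c • l₁, c • l₂))
    rw [charFun_gaussianReal, charFun_apply_real,
      integral_map (hl.comp hto).measurable.aemeasurable (by fun_prop)]
    have h2 : ∫ x, Complex.exp ((c : ℂ) * (((fun q : (Fin d → ℝ) × (Fin d → ℝ) =>
        l₁ ⬝ᵥ q.1 + l₂ ⬝ᵥ q.2) ∘ toPair) x : ℝ) * Complex.I) ∂γ
        = charFun γ (ofPair (c • l₁, c • l₂)) := by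
      rw [charFun_apply]
      refine integral_congr_ae (.of_forall fun x => ?_)
      simp only [hinner, htoof, Function.comp_apply, smul_dotProduct, smul_eq_mul]
      congr 2
      push_cast; ring
    rw [h2, h1, htoof]
    have h3 : Q (c • l₁) (c • l₂) = c ^ 2 * Q l₁ l₂ := by
      simp only [hQ, smul_dotProduct, Matrix.mulVec_smul, dotProduct_smul, smul_eq_mul]; ring
    simp only [h3]
    rw [Real.coe_toNNReal _ (hQ0 l₁ l₂)]
    congr 1
    push_cast
    ring
  · have h1 := hPG (f.compContinuous ⟨toPair, hto⟩)
    rw [integral_map hto.measurable.aemeasurable f.continuous.aestronglyMeasurable]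
    refine h1.congr fun n => ?_
    change ∫ x, f (toPair x) ∂(μ.map (fun ω => ofPair (X n ω))) = _
    rw [integral_map (hmeas n)
      (show Continuous fun x => f (toPair x) from f.continuous.comp hto).aestronglyMeasurable]
    rfl


/-! ### Assembling the two chains -/

lemma abs_half_floor_succ_sub_le {x : ℝ} (hx : 0 ≤ x) :
    |(((⌊2 * x⌋₊ + 1) / 2 : ℕ) : ℝ) - x| ≤ 1 := by
  have h1 := Nat.floor_le (show 0 ≤ 2 * x by positivity)
  have h2 := Nat.lt_floor_add_one (2 * x)
  set M := ⌊2 * x⌋₊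
  have h3 : ((2 * ((M + 1) / 2) : ℕ) : ℝ) ≤ (M + 1 : ℕ) := by exact_mod_cast (by omega)
  have h4 : (M : ℝ) ≤ ((2 * ((M + 1) / 2) : ℕ) : ℝ) := by exact_mod_cast (by omega)
  push_cast at h3 h4
  rw [abs_le]
  constructor <;> linarith

lemma abs_half_floor_sub_le {x : ℝ} (hx : 0 ≤ x) :
    |((⌊2 * x⌋₊ / 2 : ℕ) : ℝ) - x| ≤ 1 := by
  have h1 := Nat.floor_le (show 0 ≤ 2 * x by positivity)
  have h2 := Nat.lt_floor_add_one (2 * x)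
  set M := ⌊2 * x⌋₊
  have h3 : ((2 * (M / 2) : ℕ) : ℝ) ≤ (M : ℕ) := by exact_mod_cast (by omega)
  have h4 : (M : ℝ) ≤ ((2 * (M / 2) + 1 : ℕ) : ℝ) := by exact_mod_cast (by omega)
  push_cast at h3 h4
  rw [abs_le]
  constructor <;> linarith

lemma tendsto_div_of_abs_sub_le {N : ℕ → ℕ} {s : ℝ} (h : ∀ n : ℕ, |(N n : ℝ) - n * s| ≤ 1) :
    Tendsto (fun n : ℕ => (N n : ℝ) / n) atTop (𝓝 s) := by
  rw [tendsto_iff_norm_sub_tendsto_zero]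
  refine squeeze_zero' (.of_forall fun _ => norm_nonneg _) ?_
    tendsto_one_div_atTop_nhds_zero_nat
  filter_upwards [eventually_ge_atTop 1] with n hn
  have e0 : (0 : ℝ) < n := by exact_mod_cast hn
  have : (N n : ℝ) / n - s = ((N n : ℝ) - n * s) / n := by field_simp
  rw [this, Real.norm_eq_abs, abs_div, abs_of_pos e0]
  exact div_le_div_of_nonneg_right (h n) e0.le

lemma tendsto_inv_sqrt_mul_of_abs_le {x : ℕ → ℝ} {c : ℝ} (h : ∀ n : ℕ, |x n| ≤ c) :
    Tendsto (fun n : ℕ => (Real.sqrt n)⁻¹ * x n) atTop (𝓝 0) := by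
  have h1 : Tendsto (fun n : ℕ => (Real.sqrt n)⁻¹ * c) atTop (𝓝 0) := by
    have := (tendsto_inv_atTop_zero.comp
      (Real.tendsto_sqrt_atTop.comp (tendsto_natCast_atTop_atTop (R := ℝ)))).mul_const c
    simpa [Function.comp_def] using this
  refine squeeze_zero_norm (fun n => ?_) h1
  rw [Real.norm_eq_abs, abs_mul, abs_of_nonneg (by positivity)]
  exact mul_le_mul_of_nonneg_left (h n) (by positivity)

/-- The contribution of one index sequence `x` to `⟨l₁, W_s⟩ + ⟨l₂, W_t⟩` before the limit, when
`N₁` and `N₂` of its steps have been made at the two times. -/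
def centredPart {d : ℕ} (u : Fin m → Fin d → ℝ) (ub l₁ l₂ : Fin d → ℝ) (s t : ℝ) (N₁ N₂ n : ℕ)
    (x : ℕ → Fin m) : ℝ :=
  (Real.sqrt n)⁻¹ * (l₁ ⬝ᵥ (∑ k ∈ Finset.Icc 1 N₁, u (x k) - ((n : ℝ) * s) • ub)
    + l₂ ⬝ᵥ (∑ k ∈ Finset.Icc 1 N₂, u (x k) - ((n : ℝ) * t) • ub))

lemma dotProduct_sum_sub {d : ℕ} (u : Fin m → Fin d → ℝ) (ub l : Fin d → ℝ) (c : ℝ) (N : ℕ)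
    (ω : Ω) :
    l ⬝ᵥ (∑ k ∈ Finset.Icc 1 N, u (ξ k ω) - c • ub)
      = stepSum ξ (fun j => l ⬝ᵥ (u j - ub)) N ω + (N - c) * (l ⬝ᵥ ub) := by
  simp only [stepSum, dotProduct_sub, dotProduct_sum, dotProduct_smul, Finset.sum_sub_distrib,
    Finset.sum_const, Nat.card_Icc, smul_eq_mul, nsmul_eq_mul]
  simp
  ring

lemma measurable_centredPart {d : ℕ} (u : Fin m → Fin d → ℝ) (ub l₁ l₂ : Fin d → ℝ) (s t : ℝ)
    (N₁ N₂ n : ℕ) : Measurable (centredPart u ub l₁ l₂ s t N₁ N₂ n) := by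
  have hs : ∀ N, Measurable (fun x : ℕ → Fin m => ∑ k ∈ Finset.Icc 1 N, u (x k)) := fun N =>
    Finset.measurable_sum _ fun k _ => (measurable_of_countable u).comp (measurable_pi_apply k)
  have hl : ∀ (l c : Fin d → ℝ) (N : ℕ),
      Measurable (fun x : ℕ → Fin m => l ⬝ᵥ (∑ k ∈ Finset.Icc 1 N, u (x k) - c)) := fun l c N =>
    (show Continuous (fun y : Fin d → ℝ => l ⬝ᵥ (y - c)) by fun_prop).measurable.comp (hs N)
  exact ((hl _ _ _).add (hl _ _ _)).const_mul _

lemma dotProduct_cov_mulVec {d : ℕ} (u : Fin m → Fin d → ℝ) (ub l l' : Fin d → ℝ) :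
    l ⬝ᵥ ((m : ℝ)⁻¹ • ∑ i, Matrix.vecMulVec (u i - ub) (u i - ub)) *ᵥ l'
      = unifCov (fun j => l ⬝ᵥ (u j - ub)) (fun j => l' ⬝ᵥ (u j - ub)) := by
  rw [Matrix.smul_mulVec, dotProduct_smul, Matrix.sum_mulVec, dotProduct_sum, unifCov, smul_eq_mul]
  congr 1
  refine Finset.sum_congr rfl fun i _ => ?_
  rw [Matrix.vecMulVec_mulVec, op_smul_eq_smul, dotProduct_smul, smul_eq_mul, mul_comm,
    dotProduct_comm l']

lemma unifCov_self (f : Fin m → ℝ) : unifCov f f = unifVar f := by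
  simp [unifCov, unifVar, sq]

lemma sum_dotProduct_sub_mean {d : ℕ} (hm : 0 < m) (u : Fin m → Fin d → ℝ) {ub : Fin d → ℝ}
    (hub : ub = (m : ℝ)⁻¹ • ∑ i, u i) (l : Fin d → ℝ) : ∑ j, l ⬝ᵥ (u j - ub) = 0 := by
  have : (m : ℝ) ≠ 0 := by positivity
  rw [← dotProduct_sum, Finset.sum_sub_distrib]
  simp only [Finset.sum_const, Finset.card_univ, Fintype.card_fin, hub]
  rw [← Nat.cast_smul_eq_nsmul ℝ, smul_smul, mul_inv_cancel₀ this, one_smul, sub_self,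
    dotProduct_zero]

/-- `tendsto_chain` in vector form. Replacing `n s` and `n t` by the actual numbers of steps only
changes the centring by `O(1 / √n)`, that is, multiplies the integrand by a deterministic phase
tending to `1`. -/
lemma tendsto_centredPart [IsProbabilityMeasure μ] (H : IsERW μ m p ξ)
    {a : ℝ} (ha : a = ((m : ℝ) * p - 1) / ((m : ℝ) - 1)) (ha1 : -1 < a) (ha2 : a < 1 / 2)
    {N₁ N₂ : ℕ → ℕ} (hle : ∀ n, N₁ n ≤ N₂ n) {s t : ℝ} (hs : 0 < s) (ht : 0 < t)
    (hN₁ : ∀ n : ℕ, |(N₁ n : ℝ) - n * s| ≤ 1) (hN₂ : ∀ n : ℕ, |(N₂ n : ℝ) - n * t| ≤ 1)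
    {d : ℕ} (u : Fin m → Fin d → ℝ) {ub : Fin d → ℝ} (hub : ub = (m : ℝ)⁻¹ • ∑ i, u i)
    {Sig : Matrix (Fin d) (Fin d) ℝ}
    (hSig : Sig = (m : ℝ)⁻¹ • ∑ i, Matrix.vecMulVec (u i - ub) (u i - ub))
    (l₁ l₂ : Fin d → ℝ) :
    Tendsto (fun n : ℕ => ∫ ω, Complex.exp (Complex.I *
        (centredPart u ub l₁ l₂ s t (N₁ n) (N₂ n) n (fun k => ξ k ω) : ℂ)) ∂μ) atTop
      (𝓝 (Complex.exp (-((1 / (1 - 2 * a) * (s * (l₁ ⬝ᵥ Sig *ᵥ l₁)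
        + 2 * (s * (t / s) ^ a) * (l₁ ⬝ᵥ Sig *ᵥ l₂) + t * (l₂ ⬝ᵥ Sig *ᵥ l₂)) : ℝ) : ℂ) / 2))) := by
  have hm : 0 < m := by have := H.two_le; omega
  set δ : ℕ → ℝ := fun n => (Real.sqrt n)⁻¹ *
    (((N₁ n : ℝ) - n * s) * (l₁ ⬝ᵥ ub) + ((N₂ n : ℝ) - n * t) * (l₂ ⬝ᵥ ub)) with hδ
  have hδ0 : Tendsto δ atTop (𝓝 0) := by
    refine tendsto_inv_sqrt_mul_of_abs_le (c := |l₁ ⬝ᵥ ub| + |l₂ ⬝ᵥ ub|) fun n => ?_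
    refine (abs_add_le _ _).trans (add_le_add ?_ ?_) <;> rw [abs_mul]
    · exact mul_le_of_le_one_left (abs_nonneg _) (hN₁ n)
    · exact mul_le_of_le_one_left (abs_nonneg _) (hN₂ n)
  have hphase : Tendsto (fun n => Complex.exp (Complex.I * (δ n : ℂ))) atTop (𝓝 1) := by
    have := ((show Continuous (fun x : ℝ => Complex.exp (Complex.I * (x : ℂ))) by
        fun_prop).tendsto 0).comp hδ0
    simpa [Function.comp_def] using this
  have h1 := (tendsto_chain H ha ha1 ha2 hle hs ht (tendsto_div_of_abs_sub_le hN₁)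
    (tendsto_div_of_abs_sub_le hN₂) (sum_dotProduct_sub_mean hm u hub l₁)
    (sum_dotProduct_sub_mean hm u hub l₂)).mul hphase
  rw [mul_one, ← unifCov_self, ← unifCov_self, ← dotProduct_cov_mulVec, ← dotProduct_cov_mulVec,
    ← dotProduct_cov_mulVec, ← hSig] at h1
  refine h1.congr fun n => ?_
  rw [← integral_mul_const]
  refine integral_congr_ae (.of_forall fun ω => ?_)
  simp only [← Complex.exp_add]
  congr 1
  rw [centredPart, dotProduct_sum_sub, dotProduct_sum_sub, hδ]
  push_cast
  ring

lemma memory_bounds {m : ℕ} (hm : 2 ≤ m) {p a : ℝ} (hp0 : 0 < p)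
    (hp : p < ((m : ℝ) + 1) / (2 * m)) (ha : a = ((m : ℝ) * p - 1) / ((m : ℝ) - 1)) :
    p ≤ 1 ∧ -1 < a ∧ a < 1 / 2 := by
  have h2 : (2 : ℝ) ≤ m := by exact_mod_cast hm
  rw [lt_div_iff₀ (by positivity)] at hp
  have h1 : (0 : ℝ) < (m : ℝ) - 1 := by linarith
  refine ⟨by nlinarith, ?_, ?_⟩
  · rw [ha, lt_div_iff₀ h1]; nlinarith
  · rw [ha, div_lt_iff₀ h1]; linarith

/-- At time `M` the walk has made `⌈M / 2⌉` steps of the first kind and `⌊M / 2⌋` of the second. -/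
lemma walk_eq {d m m' : ℕ} {u : Fin m → Fin d → ℝ} {w : Fin m' → Fin d → ℝ}
    {ξ : ℕ → Ω → Fin m} {η : ℕ → Ω → Fin m'} {S : ℕ → Ω → Fin d → ℝ}
    (hSeven : ∀ n : ℕ, ∀ ω, S (2 * n) ω = ∑ k ∈ Finset.Icc 1 n, (u (ξ k ω) + w (η k ω)))
    (hSodd : ∀ n : ℕ, 1 ≤ n → ∀ ω, S (2 * n - 1) ω = S (2 * n - 2) ω + u (ξ n ω))
    (M : ℕ) (ω : Ω) :
    S M ω = ∑ k ∈ Finset.Icc 1 ((M + 1) / 2), u (ξ k ω) + ∑ k ∈ Finset.Icc 1 (M / 2), w (η k ω) := by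
  obtain ⟨n, rfl | rfl⟩ := M.even_or_odd'
  · rw [hSeven, show (2 * n + 1) / 2 = n by omega, show 2 * n / 2 = n by omega,
      Finset.sum_add_distrib]
  · have := hSodd (n + 1) (by omega) ω
    rw [show 2 * (n + 1) - 1 = 2 * n + 1 by omega, show 2 * (n + 1) - 2 = 2 * n by omega,
      hSeven] at this
    rw [this, show (2 * n + 1 + 1) / 2 = n + 1 by omega, show (2 * n + 1) / 2 = n by omega,
      Finset.sum_add_distrib, Finset.sum_Icc_succ_top (by omega)]
    abel

lemma transpose_cov {d m : ℕ} (u : Fin m → Fin d → ℝ) (ub : Fin d → ℝ) :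
    ((m : ℝ)⁻¹ • ∑ i, Matrix.vecMulVec (u i - ub) (u i - ub))ᵀ
      = (m : ℝ)⁻¹ • ∑ i, Matrix.vecMulVec (u i - ub) (u i - ub) := by
  simp [Matrix.transpose_smul, Matrix.transpose_sum, Matrix.transpose_vecMulVec]

end Chain

/-- **Two-time marginal convergence in the diffusive regime for the Type-II ERW**:
if `0 < p < min (p_c^m) (p_c^{m'})` and `0 < s ≤ t`, the pair
`((S_{⌊2ns⌋} - ns(ū+w̄))/√n, (S_{⌊2nt⌋} - nt(ū+w̄))/√n)` converges in distribution to a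
centered Gaussian vector `(W_s, W_t)` with covariance blocks
`𝔼[W_s W_sᵀ] = C_a s Σ(U) + C_{a'} s Σ(W)`,
`𝔼[W_s W_tᵀ] = C_a s (t/s)^a Σ(U) + C_{a'} s (t/s)^{a'} Σ(W)` and
`𝔼[W_t W_tᵀ] = C_a t Σ(U) + C_{a'} t Σ(W)`.
The joint Gaussian law is characterized through its one-dimensional projections
`(l₁, l₂) ↦ ⟨l₁, W_s⟩ + ⟨l₂, W_t⟩`. -/
theorem typeII_ERW_diffusive_two_time_marginals
    {Ω : Type*} [MeasurableSpace Ω] (μ : Measure Ω) [IsProbabilityMeasure μ]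
    (d m m' : ℕ) (hm : 2 ≤ m) (hm' : 2 ≤ m')
    (u : Fin m → Fin d → ℝ) (hu : Function.Injective u)
    (w : Fin m' → Fin d → ℝ) (hw : Function.Injective w)
    (p : ℝ) (hp0 : 0 < p)
    (hpc : p < min (((m : ℝ) + 1) / (2 * m)) (((m' : ℝ) + 1) / (2 * m')))
    (i0 : Fin m) (j0 : Fin m') (ξ : ℕ → Ω → Fin m) (η : ℕ → Ω → Fin m')
    (hERW : IsTypeIIERW μ m m' p i0 j0 ξ η)
    (S : ℕ → Ω → Fin d → ℝ)
    (hS0 : ∀ ω, S 0 ω = 0)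
    (hSeven : ∀ n : ℕ, ∀ ω, S (2 * n) ω = ∑ k ∈ Finset.Icc 1 n, (u (ξ k ω) + w (η k ω)))
    (hSodd : ∀ n : ℕ, 1 ≤ n → ∀ ω, S (2 * n - 1) ω = S (2 * n - 2) ω + u (ξ n ω))
    (s t : ℝ) (hs : 0 < s) (hst : s ≤ t)
    (ub wb : Fin d → ℝ) (hub : ub = (m : ℝ)⁻¹ • ∑ i, u i)
    (hwb : wb = (m' : ℝ)⁻¹ • ∑ j, w j)
    (SigmaU SigmaW : Matrix (Fin d) (Fin d) ℝ)
    (hSigmaU : SigmaU = (m : ℝ)⁻¹ • ∑ i, Matrix.vecMulVec (u i - ub) (u i - ub))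
    (hSigmaW : SigmaW = (m' : ℝ)⁻¹ • ∑ j, Matrix.vecMulVec (w j - wb) (w j - wb))
    (a a' Ca Ca' : ℝ)
    (ha : a = ((m : ℝ) * p - 1) / ((m : ℝ) - 1))
    (ha' : a' = ((m' : ℝ) * p - 1) / ((m' : ℝ) - 1))
    (hCa : Ca = 1 / (1 - 2 * a)) (hCa' : Ca' = 1 / (1 - 2 * a'))
    (Sss Sst Stt : Matrix (Fin d) (Fin d) ℝ)
    (hSss : Sss = (Ca * s) • SigmaU + (Ca' * s) • SigmaW)
    (hSst : Sst = (Ca * s * (t / s) ^ a) • SigmaU + (Ca' * s * (t / s) ^ a') • SigmaW)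
    (hStt : Stt = (Ca * t) • SigmaU + (Ca' * t) • SigmaW) :
    ∃ ν : Measure ((Fin d → ℝ) × (Fin d → ℝ)), IsProbabilityMeasure ν ∧
      (∀ l₁ l₂ : Fin d → ℝ,
        ν.map (fun q => l₁ ⬝ᵥ q.1 + l₂ ⬝ᵥ q.2) =
          ProbabilityTheory.gaussianReal 0 (Real.toNNReal
            (l₁ ⬝ᵥ Sss.mulVec l₁ + 2 * (l₁ ⬝ᵥ Sst.mulVec l₂) + l₂ ⬝ᵥ Stt.mulVec l₂))) ∧
      ∀ f : BoundedContinuousFunction ((Fin d → ℝ) × (Fin d → ℝ)) ℝ,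
        Tendsto (fun n : ℕ => ∫ ω, f
            ((Real.sqrt n)⁻¹ • (S ⌊2 * (n : ℝ) * s⌋₊ ω - ((n : ℝ) * s) • (ub + wb)),
             (Real.sqrt n)⁻¹ • (S ⌊2 * (n : ℝ) * t⌋₊ ω - ((n : ℝ) * t) • (ub + wb))) ∂μ)
          atTop (𝓝 (∫ x, f x ∂ν)) := by
  obtain ⟨hp1, ha1, ha2⟩ := memory_bounds hm hp0 (hpc.trans_le (min_le_left _ _)) ha
  obtain ⟨-, ha1', ha2'⟩ := memory_bounds hm' hp0 (hpc.trans_le (min_le_right _ _)) ha'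
  have Hξ : IsERW μ m p ξ := ⟨hm, hp0.le, hp1, hERW.measurable_fst, hERW.cond_fst⟩
  have Hη : IsERW μ m' p η := ⟨hm', hp0.le, hp1, hERW.measurable_snd, hERW.cond_snd⟩
  have ht : 0 < t := hs.trans_le hst
  have hU : SigmaUᵀ = SigmaU := by rw [hSigmaU]; exact transpose_cov u ub
  have hW : SigmaWᵀ = SigmaW := by rw [hSigmaW]; exact transpose_cov w wb
  -- numbers of `u`-steps and of `w`-steps made by the walk at time `⌊2nx⌋`
  let Nu : ℝ → ℕ → ℕ := fun x n => (⌊2 * (n : ℝ) * x⌋₊ + 1) / 2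
  let Nw : ℝ → ℕ → ℕ := fun x n => ⌊2 * (n : ℝ) * x⌋₊ / 2
  have hNu : ∀ x, 0 < x → ∀ n : ℕ, |(Nu x n : ℝ) - n * x| ≤ 1 := fun x hx n => by
    have := abs_half_floor_succ_sub_le (x := n * x) (by positivity)
    rwa [← mul_assoc] at this
  have hNw : ∀ x, 0 < x → ∀ n : ℕ, |(Nw x n : ℝ) - n * x| ≤ 1 := fun x hx n => by
    have := abs_half_floor_sub_le (x := n * x) (by positivity)
    rwa [← mul_assoc] at this
  have hfl : ∀ n : ℕ, ⌊2 * (n : ℝ) * s⌋₊ ≤ ⌊2 * (n : ℝ) * t⌋₊ := fun n =>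
    Nat.floor_le_floor (by gcongr)
  have hNule : ∀ n, Nu s n ≤ Nu t n := fun n =>
    Nat.div_le_div_right (Nat.add_le_add_right (hfl n) 1)
  have hNwle : ∀ n, Nw s n ≤ Nw t n := fun n => Nat.div_le_div_right (hfl n)
  have hSmeas : ∀ M, Measurable (S M) := fun M => by
    have : S M = fun ω => ∑ k ∈ Finset.Icc 1 ((M + 1) / 2), u (ξ k ω)
        + ∑ k ∈ Finset.Icc 1 (M / 2), w (η k ω) := funext (walk_eq hSeven hSodd M)
    rw [this]
    exact (Finset.measurable_sum _ fun k _ =>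
        (measurable_of_countable u).comp (hERW.measurable_fst k)).add
      (Finset.measurable_sum _ fun k _ =>
        (measurable_of_countable w).comp (hERW.measurable_snd k))
  have hXm : ∀ (c : ℝ) (M : ℕ) (v : Fin d → ℝ), Measurable (fun ω => c • (S M ω - v)) :=
    fun c M v => (show Continuous (fun y : Fin d → ℝ => c • (y - v)) by
      fun_prop).measurable.comp (hSmeas M)
  refine exists_gaussian_limit (by rw [hSss]; simp [hU, hW]) (by rw [hStt]; simp [hU, hW])
    (X := fun n ω =>
      ((Real.sqrt n)⁻¹ • (S ⌊2 * (n : ℝ) * s⌋₊ ω - ((n : ℝ) * s) • (ub + wb)),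
        (Real.sqrt n)⁻¹ • (S ⌊2 * (n : ℝ) * t⌋₊ ω - ((n : ℝ) * t) • (ub + wb))))
    (fun n => (hXm _ _ _).prodMk (hXm _ _ _)) fun l₁ l₂ => ?_
  have h1 := tendsto_centredPart Hξ ha ha1 ha2 hNule hs ht (hNu s hs) (hNu t ht) u hub hSigmaU l₁ l₂
  have h2 := tendsto_centredPart Hη ha' ha1' ha2' hNwle hs ht (hNw s hs) (hNw t ht) w hwb
    hSigmaW l₁ l₂
  have h3 := h1.mul h2
  rw [← Complex.exp_add] at h3
  convert h3 using 2 with n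
  · have hexp : Measurable (fun x : ℝ => Complex.exp (Complex.I * (x : ℂ))) :=
      (show Continuous (fun x : ℝ => Complex.exp (Complex.I * (x : ℂ))) by fun_prop).measurable
    have mu := hexp.comp (measurable_centredPart u ub l₁ l₂ s t (Nu s n) (Nu t n) n)
    have mw := hexp.comp (measurable_centredPart w wb l₁ l₂ s t (Nw s n) (Nw t n) n)
    have hi := (hERW.indep.comp mu mw).integral_fun_mul_eq_mul_integral
      (mu.comp (measurable_pi_lambda _ hERW.measurable_fst)).aestronglyMeasurable
      (mw.comp (measurable_pi_lambda _ hERW.measurable_snd)).aestronglyMeasurable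
    simp only [Function.comp_apply] at hi
    rw [← hi]
    refine integral_congr_ae (.of_forall fun ω => ?_)
    simp only [← Complex.exp_add, ← mul_add, ← Complex.ofReal_add]
    congr 3
    simp only [centredPart, Nu, Nw]
    rw [walk_eq hSeven hSodd, walk_eq hSeven hSodd]
    simp only [dotProduct_smul, dotProduct_sub, dotProduct_add, smul_add, smul_eq_mul]
    ring
  · rw [hSss, hSst, hStt, hCa, hCa']
    simp only [Matrix.add_mulVec, Matrix.smul_mulVec, dotProduct_add, dotProduct_smul, smul_eq_mul]
    congr 1
    push_cast
    ring
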